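/- arXiv:1607.02334 — 2 statements merged into one kernel-verified Lean document; each statement's English description precedes it below -/
import Mathlib

section
/- Let n ≥ 3 and let T_n be the scale-free random recursive tree on vertex set {1,…,n}. For all vertices v, w with 1 ≤ v < w ≤ n and every integer k with 2 ≤ k < n, the expected k-betweenness centrality of v strictly exceeds that of w: E[BC_k(v)] > E[BC_k(w)], where the expectation is over the random parent function f with probability P_n(f). -/
open scoped Classical

noncomputable section

/-- A valid parent function for a recursive tree on vertices `1, …, n` (encoded on
`Fin (n+1)`, where the index `0` is unused): `f t < t` and `f t ≥ 1` for `2 ≤ t ≤ n`,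
and `f` is fixed to `0` outside its domain. -/
def ValidPF (n : ℕ) (f : Fin (n+1) → Fin (n+1)) : Prop :=
  (∀ t : Fin (n+1), t.val < 2 → (f t).val = 0) ∧
  (∀ t : Fin (n+1), 2 ≤ t.val → 1 ≤ (f t).val ∧ (f t).val < t.val)

/-- `degPF n f m v` : the degree `d_f(m, v) = 1 + #{s : 2 ≤ s ≤ m, f s = v}` of vertex
`v` in the tree on `{1, …, m}` (including the virtual edge at vertex 1). -/
def degPF (n : ℕ) (f : Fin (n+1) → Fin (n+1)) (m : ℕ) (v : Fin (n+1)) : ℕ :=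
  1 + (Finset.univ.filter (fun s : Fin (n+1) => 2 ≤ s.val ∧ s.val ≤ m ∧ f s = v)).card

/-- The probability `P_n(f) = ∏_{t=2}^{n} d_f(t-1, f t) / (2t - 3)` of the parent
function `f` under the scale-free (preferential attachment) random tree model. -/
def probPF (n : ℕ) (f : Fin (n+1) → Fin (n+1)) : ℚ :=
  ∏ t ∈ Finset.univ.filter (fun t : Fin (n+1) => 2 ≤ t.val),
    (degPF n f (t.val - 1) (f t) : ℚ) / (2 * (t.val : ℚ) - 3)

/-- The recursive tree `T_n^f` with edge set `{{t, f t} : 2 ≤ t ≤ n}` determined by a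
parent function `f`. -/
def treeGraphPF (n : ℕ) (f : Fin (n+1) → Fin (n+1)) : SimpleGraph (Fin (n+1)) :=
  SimpleGraph.fromRel (fun s t => 2 ≤ t.val ∧ f t = s)

/-- `v` is an interior vertex of the `s`–`t` path: `v ≠ s`, `v ≠ t`, and
`dist s v + dist v t = dist s t`. -/
def IsInterior {V : Type*} (G : SimpleGraph V) (v s t : V) : Prop :=
  v ≠ s ∧ v ≠ t ∧ G.dist s v + G.dist v t = G.dist s t

/-- `PvPF n f k v` : the number of unordered pairs `{s,t}` with `2 ≤ dist s t ≤ k` such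
that `v` is an interior vertex of the `s`–`t` path in `T_n^f` (ordered pairs over two). -/
def PvPF (n : ℕ) (f : Fin (n+1) → Fin (n+1)) (k : ℕ) (v : Fin (n+1)) : ℕ :=
  (Finset.univ.filter (fun p : Fin (n+1) × Fin (n+1) =>
    2 ≤ (treeGraphPF n f).dist p.1 p.2 ∧ (treeGraphPF n f).dist p.1 p.2 ≤ k ∧
      IsInterior (treeGraphPF n f) v p.1 p.2)).card / 2

/-- `PtotPF n f k` : the number of unordered pairs `{s,t}` with `2 ≤ dist s t ≤ k`
in `T_n^f` (ordered pairs over two). -/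
def PtotPF (n : ℕ) (f : Fin (n+1) → Fin (n+1)) (k : ℕ) : ℕ :=
  (Finset.univ.filter (fun p : Fin (n+1) × Fin (n+1) =>
    2 ≤ (treeGraphPF n f).dist p.1 p.2 ∧ (treeGraphPF n f).dist p.1 p.2 ≤ k)).card / 2

/-- The normalized `k`-betweenness centrality of `v` in `T_n^f`. -/
def BCPF (n : ℕ) (f : Fin (n+1) → Fin (n+1)) (k : ℕ) (v : Fin (n+1)) : ℚ :=
  (PvPF n f k v : ℚ) / (PtotPF n f k : ℚ)

/-!
It suffices to compare consecutive vertices `v` and `w = v + 1`. The probability of `f` is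
proportional to `∏_u c_u!`, where `c_u` is the number of children of `u`.

If `f w ≠ v`, exchanging the labels `v` and `w` preserves validity and weight, so these `f`
contribute nothing to `E[BC_k(v)] - E[BC_k(w)]`.

If `f w = v`, let `A` be the set of the other children of `v`. As `(|A| + 1)!` is the sum of
`|S|! (|A| - |S|)!` over all `S ⊆ A`, the weight of `f` splits into shares indexed by `S`. Keep the
children in `S` and the parent of `v` in place, and exchange the children in `A \ S` with the
children of `w`: this is an involution preserving the share of `S`. Up to exchanging the labels `v`
and `w` it moves the branch `C` formed by `S` and the parent of `v` along the edge `vw`, from `v` to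
`w`. Let `X` be the number of pairs meeting `C` whose geodesics pass through `v` but not `w` before
the move, `X'` the number of those through `w` but not `v` after it, and `T`, `T'` the numbers of
pairs at distance in `[2, k]` in the two trees. The values of `BC_k(v) - BC_k(w)` at `f` and at its
partner are `(D + X) / T` and `(X' - D) / T'` for a common `D` with `|D| ≤ T, T'`, while
`T ≤ T' + X` and `T' ≤ T + X'`; hence their sum is nonnegative, and positive as soon as `v` has a
neighbour in `C`.
-/

section Counting

theorem even_card_of_swap_mem {α : Type*} {P : Finset (α × α)} (hswap : ∀ p ∈ P, p.swap ∈ P)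
    (hne : ∀ p ∈ P, p.1 ≠ p.2) : Even P.card := by
  suffices h : (P.card : ZMod 2) = 0 from (ZMod.natCast_eq_zero_iff_even).1 h
  rw [Finset.card_eq_sum_ones, Nat.cast_sum]
  exact Finset.sum_involution (fun p _ => p.swap) (fun _ _ => by decide)
    (fun p hp _ h => hne p hp (congrArg Prod.snd h)) hswap (fun p _ => p.swap_swap)

theorem two_mul_sum_mul_eq_of_involution {ι R : Type*} [Semiring R] {s : Finset ι} {e : ι → ι}
    (hmem : ∀ i ∈ s, e i ∈ s) (hinv : ∀ i, e (e i) = i) {ω : ι → R}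
    (hω : ∀ i ∈ s, ω (e i) = ω i) (δ : ι → R) :
    2 * ∑ i ∈ s, ω i * δ i = ∑ i ∈ s, ω i * (δ i + δ (e i)) := by
  have hsum : ∑ i ∈ s, ω i * δ i = ∑ i ∈ s, ω i * δ (e i) :=
    Finset.sum_nbij' e e hmem hmem (fun i _ => hinv i) (fun i _ => hinv i)
      fun i hi => by rw [hω i hi, hinv]
  simp only [mul_add, Finset.sum_add_distrib, ← hsum, two_mul]

theorem prod_one_add_card_filter_lt {α : Type*} [LinearOrder α] (s : Finset α) :
    ∏ t ∈ s, (1 + (s.filter (· < t)).card) = s.card.factorial := by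
  induction s using Finset.induction_on_max with
  | empty => simp
  | insert a s hmax ih =>
    have ha : a ∉ s := fun h => (hmax a h).false
    have hlt_max : (insert a s).filter (· < a) = s := by
      rw [Finset.filter_insert, if_neg (lt_irrefl a), Finset.filter_true_of_mem hmax]
    have hlt (t : α) (ht : t ∈ s) : (insert a s).filter (· < t) = s.filter (· < t) := by
      rw [Finset.filter_insert, if_neg (hmax t ht).not_gt]
    rw [Finset.prod_insert ha, hlt_max, Finset.card_insert_of_notMem ha, Nat.factorial_succ, ← ih,
      add_comm 1]
    exact congrArg _ (Finset.prod_congr rfl fun t ht => by rw [hlt t ht])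

theorem sum_powerset_factorial_mul_factorial {α : Type*} (s : Finset α) :
    ∑ t ∈ s.powerset, t.card.factorial * (s.card - t.card).factorial =
      (s.card + 1).factorial := by
  rw [Finset.sum_powerset_apply_card (fun m => m.factorial * (s.card - m).factorial)]
  have hterm : ∀ m ∈ Finset.range (s.card + 1),
      s.card.choose m • (m.factorial * (s.card - m).factorial) = s.card.factorial := fun m hm => by
    rw [smul_eq_mul, ← mul_assoc]
    exact Nat.choose_mul_factorial_mul_factorial (Finset.mem_range_succ_iff.1 hm)
  rw [Finset.sum_congr rfl hterm, Finset.sum_const, Finset.card_range, smul_eq_mul,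
    Nat.factorial_succ]

end Counting

section Fractions

variable {K : Type*} [Field K] [LinearOrder K] [IsStrictOrderedRing K] {D T T' X X' : K}

theorem mul_sub_le_max (hDT : |D| ≤ T) (hDT' : |D| ≤ T') (hT : T ≤ T' + X) (hT' : T' ≤ T + X') :
    D * (T - T') ≤ max (X * T') (X' * T) := by
  have hD : D * (T - T') ≤ |D| * |T - T'| := (le_abs_self _).trans (abs_mul _ _).le
  rcases le_total T' T with h | h
  · refine le_max_of_le_left (hD.trans ?_)
    rw [abs_of_nonneg (sub_nonneg.2 h), mul_comm X]
    exact mul_le_mul hDT' (by linarith) (sub_nonneg.2 h) ((abs_nonneg D).trans hDT')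
  · refine le_max_of_le_right (hD.trans ?_)
    rw [abs_sub_comm, abs_of_nonneg (sub_nonneg.2 h), mul_comm X']
    exact mul_le_mul hDT (by linarith) (sub_nonneg.2 h) ((abs_nonneg D).trans hDT)

theorem add_div_add_sub_div_pos (hX : 0 < X) (hX' : 0 < X') (hXT : X ≤ T) (hXT' : X' ≤ T')
    (hDT : |D| ≤ T) (hDT' : |D| ≤ T') (hT : T ≤ T' + X) (hT' : T' ≤ T + X') :
    0 < (D + X) / T + (X' - D) / T' := by
  have hTpos : 0 < T := hX.trans_le hXT
  have hTpos' : 0 < T' := hX'.trans_le hXT'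
  rw [div_add_div _ _ hTpos.ne' hTpos'.ne']
  have hmax : max (X * T') (X' * T) < X * T' + X' * T := by
    rw [max_lt_iff]
    constructor <;> linarith [mul_pos hX hTpos', mul_pos hX' hTpos]
  refine div_pos ?_ (mul_pos hTpos hTpos')
  linarith [mul_sub_le_max hDT hDT' hT hT']

theorem add_div_add_sub_div_nonneg (hX : 0 ≤ X) (hX' : 0 ≤ X')
    (hDT : |D| ≤ T) (hDT' : |D| ≤ T') (hT : T ≤ T' + X) (hT' : T' ≤ T + X') :
    0 ≤ (D + X) / T + (X' - D) / T' := by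
  have hTnn : 0 ≤ T := (abs_nonneg D).trans hDT
  have hTnn' : 0 ≤ T' := (abs_nonneg D).trans hDT'
  by_cases hzero : T = 0 ∨ T' = 0
  · have hD : D = 0 := by
      rcases hzero with rfl | rfl
      · exact abs_nonpos_iff.1 hDT
      · exact abs_nonpos_iff.1 hDT'
    rw [hD, zero_add, sub_zero]
    positivity
  obtain ⟨hT0, hT0'⟩ := not_or.1 hzero
  rw [div_add_div _ _ hT0 hT0']
  have hmax : max (X * T') (X' * T) ≤ X * T' + X' * T :=
    max_le_add_of_nonneg (by positivity) (by positivity)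
  refine div_nonneg ?_ (mul_nonneg hTnn hTnn')
  linarith [mul_sub_le_max hDT hDT' hT hT']

end Fractions

section Distance

variable {V W : Type*} {G : SimpleGraph V} {H : SimpleGraph W}

theorem edist_map_le {φ : V → W} (hφ : ∀ ⦃x y⦄, G.Adj x y → H.Adj (φ x) (φ y) ∨ φ x = φ y)
    (x y : V) : H.edist (φ x) (φ y) ≤ G.edist x y := by
  refine le_iInf fun p => ?_
  induction p with
  | nil => simp
  | @cons a b c hadj p ih =>
    calc H.edist (φ a) (φ c) ≤ H.edist (φ a) (φ b) + H.edist (φ b) (φ c) := H.edist_triangle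
      _ ≤ 1 + p.length := add_le_add (SimpleGraph.edist_le_one_iff_adj_or_eq.2 (hφ hadj)) ih
      _ = (SimpleGraph.Walk.cons hadj p).length := by
        rw [SimpleGraph.Walk.length_cons, Nat.cast_add, Nat.cast_one, add_comm]

theorem dist_apply_iso (e : G ≃g H) (x y : V) : H.dist (e x) (e y) = G.dist x y := by
  refine congrArg ENat.toNat (le_antisymm ?_ ?_)
  · exact edist_map_le (fun _ _ h => Or.inl (e.map_rel_iff.2 h)) x y
  · simpa using edist_map_le (G := H) (H := G) (φ := e.symm)
      (fun _ _ h => Or.inl (e.symm.map_rel_iff.2 h)) (e x) (e y)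

theorem isInterior_comm {v s t : V} : IsInterior G v s t ↔ IsInterior G v t s := by
  unfold IsInterior
  rw [G.dist_comm (u := s) (v := v), G.dist_comm (u := v) (v := t), G.dist_comm (u := s) (v := t),
    add_comm]
  tauto

theorem IsInterior.reachable {v s t : V} (h : IsInterior G v s t) (hdist : G.dist s t ≠ 0) :
    G.Reachable s v ∧ G.Reachable v t := by
  have hst : G.Reachable s t := .of_dist_ne_zero hdist
  obtain ⟨-, -, hsum⟩ := h
  by_cases hsv : G.dist s v = 0
  · have hvt : G.Reachable v t := .of_dist_ne_zero (by omega)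
    exact ⟨hst.trans hvt.symm, hvt⟩
  · have hsv : G.Reachable s v := .of_dist_ne_zero hsv
    exact ⟨hsv, hsv.symm.trans hst⟩

theorem dist_eq_add_of_forall_mem_support {x y v : V} (hxy : G.Reachable x y)
    (h : ∀ p : G.Walk x y, v ∈ p.support) : G.dist x y = G.dist x v + G.dist v y := by
  obtain ⟨p, hp⟩ := hxy.exists_walk_length_eq_dist
  have hsplit := congrArg SimpleGraph.Walk.length (p.take_spec (h p))
  rw [SimpleGraph.Walk.length_append, hp] at hsplit
  refine le_antisymm ((p.takeUntil v (h p)).reachable.dist_triangle_left y) ?_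
  rw [← hsplit]
  exact add_le_add (SimpleGraph.dist_le _) (SimpleGraph.dist_le _)

end Distance

section Betweenness

variable {V W : Type*} [Fintype V] [Fintype W]

/-- The ordered pairs of vertices at distance between `2` and `k`. Counting ordered pairs doubles
both the numerator and the denominator of the betweenness centrality. -/
def pairsWithin (G : SimpleGraph V) (k : ℕ) : Finset (V × V) :=
  Finset.univ.filter fun p => 2 ≤ G.dist p.1 p.2 ∧ G.dist p.1 p.2 ≤ k

/-- The pairs of `pairsWithin G k` that have `v` as an interior vertex. -/
def pairsThrough (G : SimpleGraph V) (k : ℕ) (v : V) : Finset (V × V) :=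
  (pairsWithin G k).filter fun p => IsInterior G v p.1 p.2

/-- The normalized `k`-betweenness centrality of a vertex of a finite graph. -/
def betweenness (G : SimpleGraph V) (k : ℕ) (v : V) : ℚ :=
  (pairsThrough G k v).card / (pairsWithin G k).card

variable {G : SimpleGraph V} {k : ℕ} {v w : V} {p : V × V}

theorem mem_pairsWithin : p ∈ pairsWithin G k ↔ 2 ≤ G.dist p.1 p.2 ∧ G.dist p.1 p.2 ≤ k := by
  simp [pairsWithin]

theorem mem_pairsThrough :
    p ∈ pairsThrough G k v ↔ p ∈ pairsWithin G k ∧ IsInterior G v p.1 p.2 := by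
  simp [pairsThrough]

theorem mem_pairsThrough_sdiff : p ∈ pairsThrough G k v \ pairsThrough G k w ↔
    p ∈ pairsWithin G k ∧ IsInterior G v p.1 p.2 ∧ ¬ IsInterior G w p.1 p.2 := by
  rw [Finset.mem_sdiff, mem_pairsThrough, mem_pairsThrough]
  tauto

theorem swap_mem_pairsWithin : p.swap ∈ pairsWithin G k ↔ p ∈ pairsWithin G k := by
  simp [mem_pairsWithin, G.dist_comm (u := p.2)]

theorem swap_mem_pairsThrough : p.swap ∈ pairsThrough G k v ↔ p ∈ pairsThrough G k v := by
  rw [mem_pairsThrough, mem_pairsThrough, swap_mem_pairsWithin, isInterior_comm,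
    Prod.fst_swap, Prod.snd_swap]

theorem fst_ne_snd_of_mem_pairsWithin (hp : p ∈ pairsWithin G k) : p.1 ≠ p.2 := fun h => by
  simp [mem_pairsWithin, h] at hp

theorem even_card_pairsWithin : Even (pairsWithin G k).card :=
  even_card_of_swap_mem (fun _ => swap_mem_pairsWithin.2) fun _ => fst_ne_snd_of_mem_pairsWithin

theorem even_card_pairsThrough : Even (pairsThrough G k v).card :=
  even_card_of_swap_mem (fun _ => swap_mem_pairsThrough.2)
    fun _ hp => fst_ne_snd_of_mem_pairsWithin (mem_pairsThrough.1 hp).1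

theorem card_pairsThrough_sub_card_pairsThrough :
    ((pairsThrough G k v).card : ℚ) - (pairsThrough G k w).card =
      (pairsThrough G k v \ pairsThrough G k w).card -
        (pairsThrough G k w \ pairsThrough G k v).card := by
  have hv := Finset.card_sdiff_add_card (pairsThrough G k v) (pairsThrough G k w)
  have hw := Finset.card_sdiff_add_card (pairsThrough G k w) (pairsThrough G k v)
  rw [Finset.union_comm, ← hv] at hw
  have hcast := congrArg (Nat.cast : ℕ → ℚ) hw
  push_cast at hcast
  linarith

theorem betweenness_apply_iso {H : SimpleGraph W} (e : G ≃g H) (k : ℕ) (v : V) :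
    betweenness H k (e v) = betweenness G k v := by
  have hwithin (p : V × V) : p ∈ pairsWithin G k ↔
      e.toEquiv.prodCongr e.toEquiv p ∈ pairsWithin H k := by
    simp [mem_pairsWithin, dist_apply_iso]
  have hthrough (p : V × V) : p ∈ pairsThrough G k v ↔
      e.toEquiv.prodCongr e.toEquiv p ∈ pairsThrough H k (e v) := by
    rw [mem_pairsThrough, mem_pairsThrough, ← hwithin]
    simp [IsInterior, dist_apply_iso]
  rw [betweenness, betweenness, Finset.card_equiv _ hwithin, Finset.card_equiv _ hthrough]

theorem betweenness_comap (G : SimpleGraph V) (e : W ≃ V) (k : ℕ) (u : W) :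
    betweenness (G.comap e) k u = betweenness G k (e u) :=
  (betweenness_apply_iso (SimpleGraph.Iso.comap e G) k u).symm

theorem BCPF_eq_betweenness {n : ℕ} (f : Fin (n + 1) → Fin (n + 1)) (k : ℕ) (v : Fin (n + 1)) :
    BCPF n f k v = betweenness (treeGraphPF n f) k v := by
  have hnum : PvPF n f k v = (pairsThrough (treeGraphPF n f) k v).card / 2 := by
    simp only [PvPF, pairsThrough, pairsWithin, Finset.filter_filter, and_assoc]
  have hden : PtotPF n f k = (pairsWithin (treeGraphPF n f) k).card / 2 := rfl
  rw [BCPF, betweenness, hnum, hden, Nat.cast_div even_card_pairsThrough.two_dvd (by simp),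
    Nat.cast_div even_card_pairsWithin.two_dvd (by simp), Nat.cast_two,
    div_div_div_cancel_right₀ two_ne_zero]

end Betweenness

section BranchMove

variable {V : Type*}

/-- The branch `C` of `G` hangs at `v`, and `H` arises from `G` by moving it along the edge `vw`
so that it hangs at `w`. The fields only carry adjacency from `G` to `H`; `H` is exactly the
modified graph when `BranchMove H G C w v` holds as well. -/
structure BranchMove (G H : SimpleGraph V) (C : Set V) (v w : V) : Prop where
  source_notMem : v ∉ C
  target_notMem : w ∉ C
  adj : G.Adj v w
  adj_inside : ∀ ⦃x y⦄, x ∈ C → y ∈ C → G.Adj x y → H.Adj x y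
  adj_outside : ∀ ⦃x y⦄, x ∉ C → y ∉ C → G.Adj x y → H.Adj x y
  eq_source : ∀ ⦃c x⦄, c ∈ C → x ∉ C → G.Adj c x → x = v
  adj_target : ∀ ⦃c⦄, c ∈ C → G.Adj c v → H.Adj c w

namespace BranchMove

variable {G H : SimpleGraph V} {C : Set V} {v w c x y : V}

theorem comap {W : Type*} (h : BranchMove G H C v w) (e : W ≃ V) :
    BranchMove (G.comap e) (H.comap e) (e ⁻¹' C) (e.symm v) (e.symm w) where
  source_notMem := by simpa using h.source_notMem
  target_notMem := by simpa using h.target_notMem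
  adj := by simpa using h.adj
  adj_inside _ _ hx hy := h.adj_inside hx hy
  adj_outside _ _ hx hy := h.adj_outside hx hy
  eq_source _ _ hc hx hcx := e.eq_symm_apply.2 (h.eq_source hc hx hcx)
  adj_target c hc hcv := by simpa using h.adj_target hc (by simpa using hcv)

theorem swap_apply_of_mem (h : BranchMove G H C v w) (hc : c ∈ C) : Equiv.swap v w c = c :=
  Equiv.swap_apply_of_ne_of_ne (fun hcv => h.source_notMem (hcv ▸ hc))
    (fun hcw => h.target_notMem (hcw ▸ hc))

theorem source_mem_support (h : BranchMove G H C v w) (hc : c ∈ C) (hx : x ∉ C) (p : G.Walk c x) :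
    v ∈ p.support := by
  obtain ⟨d, hd, hfst, hsnd⟩ := p.exists_boundary_dart C hc hx
  exact h.eq_source hfst hsnd d.adj ▸ p.dart_snd_mem_support_of_mem_darts hd

theorem dist_eq_add_source (h : BranchMove G H C v w) (hc : c ∈ C) (hx : x ∉ C)
    (hcx : G.Reachable c x) : G.dist c x = G.dist c v + G.dist v x :=
  dist_eq_add_of_forall_mem_support hcx (h.source_mem_support hc hx)

theorem reachable_source (h : BranchMove G H C v w) (hc : c ∈ C) (hx : x ∉ C)
    (hcx : G.Reachable c x) : G.Reachable c v :=
  hcx.elim fun p => (p.takeUntil v (h.source_mem_support hc hx p)).reachable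

theorem dist_target_eq_add_one (h : BranchMove G H C v w) (hc : c ∈ C) (hcv : G.Reachable c v) :
    G.dist c w = G.dist c v + 1 := by
  rw [h.dist_eq_add_source hc h.target_notMem (hcv.trans h.adj.reachable),
    SimpleGraph.dist_eq_one_iff_adj.2 h.adj]

theorem edist_outside_le (h : BranchMove G H C v w) (hx : x ∉ C) (hy : y ∉ C) :
    H.edist x y ≤ G.edist x y := by
  have hcollapse : ∀ ⦃a b⦄, G.Adj a b →
      H.Adj (if a ∈ C then v else a) (if b ∈ C then v else b) ∨
        (if a ∈ C then v else a) = if b ∈ C then v else b := by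
    intro a b hab
    split_ifs with ha hb hb
    · exact Or.inr rfl
    · exact Or.inr (h.eq_source ha hb hab).symm
    · exact Or.inr (h.eq_source hb ha hab.symm)
    · exact Or.inl (h.adj_outside ha hb hab)
  simpa [hx, hy] using edist_map_le hcollapse x y

theorem edist_collapse_outside_le (h : BranchMove G H C v w) (x y : V) :
    H.edist (if x ∈ C then x else w) (if y ∈ C then y else w) ≤ G.edist x y := by
  refine edist_map_le (φ := fun a => if a ∈ C then a else w) (fun a b hab => ?_) x y
  split_ifs with ha hb hb
  · exact Or.inl (h.adj_inside ha hb hab)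
  · exact Or.inl (h.adj_target ha (h.eq_source ha hb hab ▸ hab))
  · exact Or.inl (h.adj_target hb (h.eq_source hb ha hab.symm ▸ hab.symm)).symm
  · exact Or.inr rfl

section TwoSided

variable (h : BranchMove G H C v w) (h' : BranchMove H G C w v)
include h h'

theorem dist_outside (hx : x ∉ C) (hy : y ∉ C) : H.dist x y = G.dist x y :=
  congrArg ENat.toNat ((h.edist_outside_le hx hy).antisymm (h'.edist_outside_le hx hy))

theorem dist_inside (hx : x ∈ C) (hy : y ∈ C) : H.dist x y = G.dist x y := by
  have hle := h.edist_collapse_outside_le x y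
  have hge := h'.edist_collapse_outside_le x y
  simp only [hx, hy, if_true] at hle hge
  exact congrArg ENat.toNat (hle.antisymm hge)

theorem edist_target (hc : c ∈ C) : H.edist c w = G.edist c v := by
  have hle := h.edist_collapse_outside_le c v
  have hge := h'.edist_collapse_outside_le c w
  simp only [hc, h.source_notMem, h.target_notMem, if_true, if_false] at hle hge
  exact hle.antisymm hge

theorem dist_target (hc : c ∈ C) : H.dist c w = G.dist c v :=
  congrArg ENat.toNat (edist_target h h' hc)

theorem reachable_target (hc : c ∈ C) (hcv : G.Reachable c v) : H.Reachable c w := by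
  rw [← SimpleGraph.edist_ne_top_iff_reachable, edist_target h h' hc]
  exact SimpleGraph.edist_ne_top_iff_reachable.2 hcv

theorem dist_eq_dist_source_add (hc : c ∈ C) (hx : x ∉ C) (hcv : G.Reachable c v)
    (hvx : G.Reachable v x) : H.dist c x = G.dist c v + G.dist w x := by
  have hwx : H.Reachable w x :=
    h'.adj.reachable.trans <| SimpleGraph.edist_ne_top_iff_reachable.1 <|
      ne_top_of_le_ne_top (SimpleGraph.edist_ne_top_iff_reachable.2 hvx)
        (h.edist_outside_le h.source_notMem hx)
  rw [h'.dist_eq_add_source hc hx ((reachable_target h h' hc hcv).trans hwx), dist_target h h' hc,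
    dist_outside h h' h.target_notMem hx]

theorem isInterior_outside_iff {u s t : V} (hu : u ∉ C) (hs : s ∉ C) (ht : t ∉ C) :
    IsInterior H u s t ↔ IsInterior G u s t := by
  simp only [IsInterior, dist_outside h h' hs hu, dist_outside h h' hu ht,
    dist_outside h h' hs ht]

end TwoSided

theorem isInterior_source_of_target (h : BranchMove G H C v w) (hc : c ∈ C)
    (hdist : G.dist c x ≠ 0) (hw : IsInterior G w c x) : IsInterior G v c x := by
  have hvc : v ≠ c := fun hvc => h.source_notMem (hvc ▸ hc)
  obtain ⟨hcw, hwx⟩ := hw.reachable hdist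
  have hcv : G.Reachable c v := hcw.trans h.adj.symm.reachable
  have hdist_cw := h.dist_target_eq_add_one hc hcv
  obtain ⟨-, -, hsum⟩ := hw
  by_cases hx : x ∈ C
  · have hxv : G.Reachable x v := hwx.symm.trans h.adj.symm.reachable
    have hdist_xw := h.dist_target_eq_add_one hx hxv
    have htriangle := hcv.dist_triangle_left x
    rw [G.dist_comm (u := x), G.dist_comm (u := x)] at hdist_xw
    omega
  · refine ⟨hvc, ?_, (h.dist_eq_add_source hc hx (hcw.trans hwx)).symm⟩
    rintro rfl
    omega

section Counting

variable [Fintype V] {k : ℕ} {p : V × V}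

/-- The pairs meeting the branch `C` whose geodesics run through `v` but not through `w`. -/
def branchGain (G : SimpleGraph V) (C : Set V) (k : ℕ) (v w : V) : Finset (V × V) :=
  (pairsThrough G k v \ pairsThrough G k w).filter fun p => p.1 ∈ C ∨ p.2 ∈ C

theorem mem_branchGain : p ∈ branchGain G C k v w ↔
    p ∈ pairsThrough G k v \ pairsThrough G k w ∧ (p.1 ∈ C ∨ p.2 ∈ C) := by
  rw [branchGain, Finset.mem_filter]

theorem swap_mem_branchGain : p.swap ∈ branchGain G C k v w ↔ p ∈ branchGain G C k v w := by
  rw [mem_branchGain, mem_branchGain, Finset.mem_sdiff, Finset.mem_sdiff, swap_mem_pairsThrough,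
    swap_mem_pairsThrough, Prod.fst_swap, Prod.snd_swap, or_comm]

theorem branchGain_subset_pairsWithin : branchGain G C k v w ⊆ pairsWithin G k :=
  fun _ hp => (mem_pairsThrough_sdiff.1 (mem_branchGain.1 hp).1).1

theorem mk_target_mem_branchGain (h : BranchMove G H C v w) (hc : c ∈ C) (hcv : G.Reachable c v)
    (hk : G.dist c v + 1 ≤ k) : (c, w) ∈ branchGain G C k v w := by
  have hvc : v ≠ c := fun hvc => h.source_notMem (hvc ▸ hc)
  have hdist := h.dist_target_eq_add_one hc hcv
  have hpos := hcv.pos_dist_of_ne hvc.symm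
  refine mem_branchGain.2 ⟨mem_pairsThrough_sdiff.2 ⟨mem_pairsWithin.2 ?_, ?_, ?_⟩, Or.inl hc⟩
  · dsimp only
    omega
  · exact ⟨hvc, h.adj.ne, (h.dist_eq_add_source hc h.target_notMem
      (hcv.trans h.adj.reachable)).symm⟩
  · exact fun hw => hw.2.1 rfl

theorem branchGain_card_pos (h : BranchMove G H C v w) (hk : 2 ≤ k) (hc : c ∈ C)
    (hcv : G.Adj c v) : 0 < (branchGain G C k v w).card :=
  Finset.card_pos.2 ⟨(c, w), h.mk_target_mem_branchGain hc hcv.reachable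
    (by rwa [SimpleGraph.dist_eq_one_iff_adj.2 hcv])⟩

theorem fst_notMem_of_mem_sdiff (h : BranchMove G H C v w)
    (hp : p ∈ pairsThrough G k w \ pairsThrough G k v) : p.1 ∉ C := fun hC => by
  obtain ⟨hwithin, hw, hv⟩ := mem_pairsThrough_sdiff.1 hp
  have hdist := (mem_pairsWithin.1 hwithin).1
  exact hv (h.isInterior_source_of_target hC (by omega) hw)

theorem notMem_of_mem_sdiff (h : BranchMove G H C v w)
    (hp : p ∈ pairsThrough G k w \ pairsThrough G k v) : ¬ (p.1 ∈ C ∨ p.2 ∈ C) := by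
  have hp' : p.swap ∈ pairsThrough G k w \ pairsThrough G k v := by
    simpa only [Finset.mem_sdiff, swap_mem_pairsThrough] using hp
  exact not_or.2 ⟨h.fst_notMem_of_mem_sdiff hp, h.fst_notMem_of_mem_sdiff hp'⟩

variable (h : BranchMove G H C v w) (h' : BranchMove H G C w v)
include h h'

theorem mem_pairsWithin_outside_iff (hp : ¬ (p.1 ∈ C ∨ p.2 ∈ C)) :
    p ∈ pairsWithin H k ↔ p ∈ pairsWithin G k := by
  obtain ⟨hfst, hsnd⟩ := not_or.1 hp
  rw [mem_pairsWithin, mem_pairsWithin, dist_outside h h' hfst hsnd]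

theorem filter_outside_sdiff_eq :
    (pairsThrough G k v \ pairsThrough G k w).filter (fun p => ¬ (p.1 ∈ C ∨ p.2 ∈ C)) =
      pairsThrough H k v \ pairsThrough H k w := by
  ext p
  rw [Finset.mem_filter]
  have hiff (hp : ¬ (p.1 ∈ C ∨ p.2 ∈ C)) : p ∈ pairsThrough H k v \ pairsThrough H k w ↔
      p ∈ pairsThrough G k v \ pairsThrough G k w := by
    obtain ⟨hfst, hsnd⟩ := not_or.1 hp
    rw [mem_pairsThrough_sdiff, mem_pairsThrough_sdiff, mem_pairsWithin_outside_iff h h' hp,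
      isInterior_outside_iff h h' h.source_notMem hfst hsnd,
      isInterior_outside_iff h h' h.target_notMem hfst hsnd]
  exact ⟨fun hp => (hiff hp.2).2 hp.1, fun hp =>
    have hout := h'.notMem_of_mem_sdiff hp
    ⟨(hiff hout).1 hp, hout⟩⟩

theorem card_sdiff_eq_add_card_branchGain :
    (pairsThrough G k v \ pairsThrough G k w).card =
      (pairsThrough H k v \ pairsThrough H k w).card + (branchGain G C k v w).card := by
  rw [← filter_outside_sdiff_eq h h', branchGain, add_comm,
    Finset.card_filter_add_card_filter_not]

theorem card_sdiff_le_card_pairsWithin :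
    (pairsThrough H k v \ pairsThrough H k w).card ≤ (pairsWithin G k).card := by
  rw [← filter_outside_sdiff_eq h h']
  exact Finset.card_le_card fun p hp =>
    (mem_pairsThrough_sdiff.1 (Finset.mem_filter.1 hp).1).1

theorem mk_swap_mem_pairsWithin (hc : c ∈ C) (hx : x ∉ C) (hp : (c, x) ∈ pairsWithin G k)
    (hgain : (c, x) ∉ branchGain G C k v w) : (c, Equiv.swap v w x) ∈ pairsWithin H k := by
  have hdist := mem_pairsWithin.1 hp
  rw [mem_pairsWithin]
  dsimp only at hdist ⊢
  have hcx : G.Reachable c x := .of_dist_ne_zero (by omega)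
  have hcv := h.reachable_source hc hx hcx
  have hvx := hcv.symm.trans hcx
  have hvc : v ≠ c := fun hvc => h.source_notMem (hvc ▸ hc)
  have hsource := h.dist_eq_add_source hc hx hcx
  by_cases hxv : x = v
  · rwa [hxv, Equiv.swap_apply_left, dist_target h h' hc, ← hxv]
  by_cases hxw : x = w
  · have hcw := h.dist_target_eq_add_one hc hcv
    exact absurd (h.mk_target_mem_branchGain hc hcv (by rw [← hcw, ← hxw]; exact hdist.2))
      (hxw ▸ hgain)
  rw [Equiv.swap_apply_of_ne_of_ne hxv hxw, dist_eq_dist_source_add h h' hc hx hcv hvx]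
  have hpos := hcv.pos_dist_of_ne hvc.symm
  have hpos' := (h.adj.symm.reachable.trans hvx).pos_dist_of_ne (Ne.symm hxw)
  suffices hle : G.dist w x ≤ G.dist v x by omega
  -- If `w` were farther from `x` than `v`, the `c`–`x` geodesic would run through `v` only.
  by_contra hlt
  refine hgain (mem_branchGain.2 ⟨mem_pairsThrough_sdiff.2
    ⟨hp, ⟨hvc, Ne.symm hxv, hsource.symm⟩, fun hw => ?_⟩, Or.inl hc⟩)
  have hcw := h.dist_target_eq_add_one hc hcv
  have hsum := hw.2.2
  dsimp only at hsum
  omega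

theorem map_swap_mem_pairsWithin (hp : p ∈ pairsWithin G k) (hC : p.1 ∈ C ∨ p.2 ∈ C)
    (hgain : p ∉ branchGain G C k v w) :
    p.map (Equiv.swap v w) (Equiv.swap v w) ∈ pairsWithin H k := by
  obtain ⟨s, t⟩ := p
  rw [Prod.map_apply]
  by_cases hs : s ∈ C <;> by_cases ht : t ∈ C
  · rw [h.swap_apply_of_mem hs, h.swap_apply_of_mem ht, mem_pairsWithin, dist_inside h h' hs ht]
    exact mem_pairsWithin.1 hp
  · rw [h.swap_apply_of_mem hs]
    exact mk_swap_mem_pairsWithin h h' hs ht hp hgain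
  · rw [h.swap_apply_of_mem ht]
    exact swap_mem_pairsWithin.1 <| mk_swap_mem_pairsWithin h h' ht hs
      (swap_mem_pairsWithin (p := (s, t)).2 hp) (mt (swap_mem_branchGain (p := (s, t))).1 hgain)
  · exact absurd hC (not_or.2 ⟨hs, ht⟩)

theorem card_filter_inside_le :
    ((pairsWithin G k).filter fun p => p.1 ∈ C ∨ p.2 ∈ C).card ≤
      ((pairsWithin H k).filter fun p => p.1 ∈ C ∨ p.2 ∈ C).card +
        (branchGain G C k v w).card := by
  refine (Finset.card_le_card_sdiff_add_card (t := branchGain G C k v w)).trans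
    (Nat.add_le_add_right ?_ _)
  refine Finset.card_le_card_of_injOn (Prod.map (Equiv.swap v w) (Equiv.swap v w)) ?_
    ((Equiv.swap v w).injective.prodMap (Equiv.swap v w).injective).injOn
  intro p hp
  obtain ⟨hp, hgain⟩ := Finset.mem_sdiff.1 hp
  obtain ⟨hp, hC⟩ := Finset.mem_filter.1 hp
  refine Finset.mem_filter.2 ⟨map_swap_mem_pairsWithin h h' hp hC hgain, ?_⟩
  exact hC.imp (fun hC => by rwa [Prod.map_fst, h.swap_apply_of_mem hC])
    (fun hC => by rwa [Prod.map_snd, h.swap_apply_of_mem hC])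

theorem card_pairsWithin_le :
    (pairsWithin G k).card ≤ (pairsWithin H k).card + (branchGain G C k v w).card := by
  have houtside : (pairsWithin G k).filter (fun p => ¬ (p.1 ∈ C ∨ p.2 ∈ C)) =
      (pairsWithin H k).filter fun p => ¬ (p.1 ∈ C ∨ p.2 ∈ C) := by
    ext p
    simp only [Finset.mem_filter, and_congr_left_iff]
    exact fun hp => (mem_pairsWithin_outside_iff h h' hp).symm
  have hinside := card_filter_inside_le h h' (k := k)
  rw [← Finset.card_filter_add_card_filter_not (s := pairsWithin G k) fun p => p.1 ∈ C ∨ p.2 ∈ C,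
    ← Finset.card_filter_add_card_filter_not (s := pairsWithin H k) fun p => p.1 ∈ C ∨ p.2 ∈ C,
    houtside]
  omega

theorem betweenness_sub_eq :
    betweenness G k v - betweenness G k w =
      ((pairsThrough H k v \ pairsThrough H k w).card
        - (pairsThrough G k w \ pairsThrough G k v).card
        + (branchGain G C k v w).card) / (pairsWithin G k).card := by
  rw [betweenness, betweenness, ← sub_div, card_pairsThrough_sub_card_pairsThrough,
    card_sdiff_eq_add_card_branchGain h h', Nat.cast_add]
  ring

theorem abs_card_sdiff_sub_card_sdiff_le :
    |((pairsThrough H k v \ pairsThrough H k w).card : ℚ)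
        - (pairsThrough G k w \ pairsThrough G k v).card| ≤ (pairsWithin G k).card := by
  refine abs_sub_le_of_nonneg_of_le (Nat.cast_nonneg _)
    (Nat.cast_le.2 (card_sdiff_le_card_pairsWithin h h')) (Nat.cast_nonneg _) (Nat.cast_le.2 ?_)
  exact Finset.card_le_card fun p hp => (mem_pairsThrough_sdiff.1 hp).1

theorem betweenness_sub_add_betweenness_sub_nonneg (k : ℕ) :
    0 ≤ (betweenness G k v - betweenness G k w) + (betweenness H k w - betweenness H k v) := by
  have hD := abs_card_sdiff_sub_card_sdiff_le h h' (k := k)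
  have hD' := abs_card_sdiff_sub_card_sdiff_le h' h (k := k)
  rw [betweenness_sub_eq h h', betweenness_sub_eq h' h,
    ← neg_sub ((pairsThrough H k v \ pairsThrough H k w).card : ℚ), neg_add_eq_sub]
  rw [abs_sub_comm] at hD'
  exact add_div_add_sub_div_nonneg (Nat.cast_nonneg _) (Nat.cast_nonneg _) hD hD'
    (mod_cast card_pairsWithin_le h h') (mod_cast card_pairsWithin_le h' h)

theorem betweenness_sub_add_betweenness_sub_pos (hk : 2 ≤ k) (hc : c ∈ C) (hcv : G.Adj c v) :
    0 < (betweenness G k v - betweenness G k w) + (betweenness H k w - betweenness H k v) := by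
  have hD := abs_card_sdiff_sub_card_sdiff_le h h' (k := k)
  have hD' := abs_card_sdiff_sub_card_sdiff_le h' h (k := k)
  rw [betweenness_sub_eq h h', betweenness_sub_eq h' h,
    ← neg_sub ((pairsThrough H k v \ pairsThrough H k w).card : ℚ), neg_add_eq_sub]
  rw [abs_sub_comm] at hD'
  exact add_div_add_sub_div_pos (Nat.cast_pos.2 (h.branchGain_card_pos hk hc hcv))
    (Nat.cast_pos.2 (h'.branchGain_card_pos hk hc (h.adj_target hc hcv)))
    (Nat.cast_le.2 (Finset.card_le_card branchGain_subset_pairsWithin))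
    (Nat.cast_le.2 (Finset.card_le_card branchGain_subset_pairsWithin)) hD hD'
    (mod_cast card_pairsWithin_le h h') (mod_cast card_pairsWithin_le h' h)

end Counting

end BranchMove

end BranchMove

section Weight

variable {n : ℕ} {f : Fin (n + 1) → Fin (n + 1)}

/-- The children of `u` in the recursive tree with parent function `f`. -/
def children (f : Fin (n + 1) → Fin (n + 1)) (u : Fin (n + 1)) : Finset (Fin (n + 1)) :=
  Finset.univ.filter fun t => 2 ≤ t.val ∧ f t = u

/-- The unnormalized probability of a parent function: when the children of `u` arrive, they
contribute the factors `1, 2, …, #(children f u)`. -/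
def treeWeight (f : Fin (n + 1) → Fin (n + 1)) : ℚ :=
  ∏ u, ((children f u).card.factorial : ℚ)

/-- The total weight `∏_{t=2}^{n} (2t - 3)` of all parent functions. -/
def totalWeight (n : ℕ) : ℚ :=
  ∏ t ∈ Finset.univ.filter (fun t : Fin (n + 1) => 2 ≤ t.val), (2 * (t.val : ℚ) - 3)

theorem mem_children {t u : Fin (n + 1)} : t ∈ children f u ↔ 2 ≤ t.val ∧ f t = u := by
  simp [children]

theorem totalWeight_pos (n : ℕ) : 0 < totalWeight n := by
  refine Finset.prod_pos fun t ht => ?_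
  have ht : (2 : ℚ) ≤ t.val := mod_cast (Finset.mem_filter.1 ht).2
  linarith

theorem degPF_pred_eq_of_mem_children {t u : Fin (n + 1)} (ht : t ∈ children f u) :
    degPF n f (t.val - 1) (f t) = 1 + ((children f u).filter (· < t)).card := by
  obtain ⟨ht2, htu⟩ := mem_children.1 ht
  rw [degPF, htu]
  congr 2
  ext s
  simp only [Finset.mem_filter, Finset.mem_univ, true_and, mem_children, Fin.lt_def]
  omega

theorem probPF_eq_treeWeight_div (f : Fin (n + 1) → Fin (n + 1)) :
    probPF n f = treeWeight f / totalWeight n := by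
  rw [probPF, Finset.prod_div_distrib]
  refine congrArg (· / totalWeight n) ?_
  rw [← Finset.prod_fiberwise _ f, treeWeight]
  refine Finset.prod_congr rfl fun u _ => ?_
  rw [Finset.filter_filter, ← prod_one_add_card_filter_lt, Nat.cast_prod]
  exact Finset.prod_congr rfl fun t ht =>
    congrArg Nat.cast (degPF_pred_eq_of_mem_children (f := f) (u := u) ht)

theorem treeGraphPF_adj {s t : Fin (n + 1)} : (treeGraphPF n f).Adj s t ↔
    s ≠ t ∧ (2 ≤ t.val ∧ f t = s ∨ 2 ≤ s.val ∧ f s = t) :=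
  SimpleGraph.fromRel_adj _ _ _

theorem treeGraphPF_adj_parent (hf : ValidPF n f) {t : Fin (n + 1)} (ht : 2 ≤ t.val) :
    (treeGraphPF n f).Adj t (f t) :=
  treeGraphPF_adj.2 ⟨fun h => (hf.2 t ht).2.ne (congrArg Fin.val h.symm), Or.inr ⟨ht, rfl⟩⟩

end Weight

section Relabel

variable {n : ℕ} {f : Fin (n + 1) → Fin (n + 1)} {v w : Fin (n + 1)}

/-- The parent function obtained from `f` by exchanging the labels `v` and `w`. -/
def relabel (v w : Fin (n + 1)) (f : Fin (n + 1) → Fin (n + 1)) (t : Fin (n + 1)) : Fin (n + 1) :=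
  Equiv.swap v w (f (Equiv.swap v w t))

theorem relabel_relabel : relabel v w (relabel v w f) = f := by
  funext t
  simp [relabel]

theorem relabel_apply_eq_iff {t u : Fin (n + 1)} :
    relabel v w f t = u ↔ f (Equiv.swap v w t) = Equiv.swap v w u := by
  rw [relabel, ← Equiv.eq_symm_apply, Equiv.symm_swap]

theorem two_le_swap_iff (hv : 2 ≤ v.val) (hw : 2 ≤ w.val) (t : Fin (n + 1)) :
    2 ≤ (Equiv.swap v w t).val ↔ 2 ≤ t.val := by
  rw [Equiv.swap_apply_def]
  split_ifs with htv htw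
  · simp only [hw, htv, hv]
  · simp only [hv, htw, hw]
  · rfl

theorem treeWeight_relabel (hv : 2 ≤ v.val) (hw : 2 ≤ w.val) :
    treeWeight (relabel v w f) = treeWeight f := by
  refine Fintype.prod_equiv (Equiv.swap v w) _ _ fun u => congrArg (Nat.cast ∘ Nat.factorial) ?_
  refine Finset.card_equiv (Equiv.swap v w) fun t => ?_
  rw [mem_children, mem_children, two_le_swap_iff hv hw, relabel_apply_eq_iff]

/-- The exchange of `v` and `w` as an isomorphism from the relabelled tree to the original one. -/
def relabelIso (f : Fin (n + 1) → Fin (n + 1)) (hv : 2 ≤ v.val) (hw : 2 ≤ w.val) :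
    treeGraphPF n (relabel v w f) ≃g treeGraphPF n f where
  toEquiv := Equiv.swap v w
  map_rel_iff' {s t} := by
    rw [treeGraphPF_adj, treeGraphPF_adj, two_le_swap_iff hv hw, two_le_swap_iff hv hw,
      relabel_apply_eq_iff, relabel_apply_eq_iff, (Equiv.swap v w).injective.ne_iff]

theorem BCPF_relabel (hv : 2 ≤ v.val) (hw : 2 ≤ w.val) (k : ℕ) (u : Fin (n + 1)) :
    BCPF n (relabel v w f) k u = BCPF n f k (Equiv.swap v w u) := by
  rw [BCPF_eq_betweenness, BCPF_eq_betweenness]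
  exact (betweenness_apply_iso (relabelIso f hv hw) k u).symm

theorem validPF_relabel (hf : ValidPF n f) (hv : 2 ≤ v.val) (hw : w.val = v.val + 1)
    (hne : f w ≠ v) : ValidPF n (relabel v w f) := by
  have hne : (f w).val ≠ v.val := fun h => hne (Fin.ext h)
  refine ⟨fun t ht => ?_, fun t ht => ?_⟩
  · have hft := hf.1 t ht
    simp only [relabel, Equiv.swap_apply_def, Fin.ext_iff]
    grind
  · have hfv := hf.2 v hv
    have hfw := hf.2 w (by omega)
    have hft := hf.2 t ht
    simp only [relabel, Equiv.swap_apply_def, Fin.ext_iff]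
    grind

theorem relabel_apply_right_ne (hf : ValidPF n f) (hv : 2 ≤ v.val) (hw : w.val = v.val + 1) :
    relabel v w f w ≠ v := by
  have hfv := (hf.2 v hv).2
  rw [Ne, relabel_apply_eq_iff, Equiv.swap_apply_right, Equiv.swap_apply_left, Fin.ext_iff]
  omega

theorem two_le_of_parent_succ_ne (hf : ValidPF n f) (hv : 1 ≤ v.val) (hw : w.val = v.val + 1)
    (hne : f w ≠ v) : 2 ≤ v.val := by
  have hfw := hf.2 w (by omega)
  have hne : (f w).val ≠ v.val := fun h => hne (Fin.ext h)
  omega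

theorem sum_treeWeight_mul_BCPF_sub_eq_zero (hv : 1 ≤ v.val) (hw : w.val = v.val + 1) (k : ℕ) :
    ∑ f ∈ Finset.univ.filter (fun f => ValidPF n f ∧ f w ≠ v),
      treeWeight f * (BCPF n f k v - BCPF n f k w) = 0 := by
  by_cases hv2 : 2 ≤ v.val
  · have hw2 : 2 ≤ w.val := by omega
    refine (mul_eq_zero.1 ?_).resolve_left (two_ne_zero (α := ℚ))
    rw [two_mul_sum_mul_eq_of_involution (e := relabel v w) (fun f hf => ?_)
      (fun f => relabel_relabel) (fun f _ => treeWeight_relabel hv2 hw2)]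
    · refine Finset.sum_eq_zero fun f _ => ?_
      rw [BCPF_relabel hv2 hw2, BCPF_relabel hv2 hw2, Equiv.swap_apply_left,
        Equiv.swap_apply_right, sub_add_sub_cancel, sub_self, mul_zero]
    · obtain ⟨-, hf, hne⟩ := Finset.mem_filter.1 hf
      exact Finset.mem_filter.2 ⟨Finset.mem_univ _, validPF_relabel hf hv2 hw hne,
        relabel_apply_right_ne hf hv2 hw⟩
  · refine Finset.sum_eq_zero fun f hf => absurd ?_ hv2
    obtain ⟨-, hf, hne⟩ := Finset.mem_filter.1 hf
    exact two_le_of_parent_succ_ne hf hv hw hne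

end Relabel

section Exchange

variable {n : ℕ} {f : Fin (n + 1) → Fin (n + 1)} {v w : Fin (n + 1)} {S : Finset (Fin (n + 1))}

/-- The parent function obtained from `f` by exchanging the children of `v` that are later than `w`
and not in `S` with the children of `w`. -/
def exchange (v w : Fin (n + 1)) (S : Finset (Fin (n + 1))) (f : Fin (n + 1) → Fin (n + 1))
    (t : Fin (n + 1)) : Fin (n + 1) :=
  if t ≤ w ∨ t ∈ S then f t else Equiv.swap v w (f t)

/-- The situation in which `exchange v w S` is applied: `w` is the first possible child of `v`, it
is a child of `v`, and `S` consists of further children of `v`, which stay in place. -/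
structure IsExchange (v w : Fin (n + 1)) (S : Finset (Fin (n + 1)))
    (f : Fin (n + 1) → Fin (n + 1)) : Prop where
  valid : ValidPF n f
  succ : w.val = v.val + 1
  right_mem_children : w ∈ children f v
  subset : S ⊆ (children f v).erase w

/-- The vertices that keep their position relative to the edge `vw` under an exchange: `v`, `w`, and
all descendants of these that are not in a subtree rooted in `S`. The complement, which contains the
unused index `0`, is the branch that moves from `v` to `w`. -/
inductive InCore (v w : Fin (n + 1)) (S : Finset (Fin (n + 1))) (f : Fin (n + 1) → Fin (n + 1)) :
    Fin (n + 1) → Prop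
  | left : InCore v w S f v
  | right : InCore v w S f w
  | step {t : Fin (n + 1)} : w < t → t ∉ S → InCore v w S f (f t) → InCore v w S f t

theorem exchange_of_le {t : Fin (n + 1)} (ht : t ≤ w) : exchange v w S f t = f t :=
  if_pos (Or.inl ht)

theorem exchange_of_mem {t : Fin (n + 1)} (ht : t ∈ S) : exchange v w S f t = f t :=
  if_pos (Or.inr ht)

theorem exchange_of_lt_of_notMem {t : Fin (n + 1)} (hwt : w < t) (ht : t ∉ S) :
    exchange v w S f t = Equiv.swap v w (f t) :=
  if_neg (not_or.2 ⟨hwt.not_ge, ht⟩)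

theorem exchange_exchange : exchange v w S (exchange v w S f) = f := by
  funext t
  by_cases ht : t ≤ w ∨ t ∈ S
  · rw [exchange, if_pos ht, exchange, if_pos ht]
  · rw [exchange, if_neg ht, exchange, if_neg ht, Equiv.swap_apply_self]

theorem children_exchange_of_ne {u : Fin (n + 1)} (huv : u ≠ v) (huw : u ≠ w) :
    children (exchange v w S f) u = children f u := by
  ext t
  rw [mem_children, mem_children, exchange]
  split_ifs
  · rfl
  · rw [← Equiv.eq_symm_apply, Equiv.symm_swap, Equiv.swap_apply_of_ne_of_ne huv huw]

namespace IsExchange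

variable {c t : Fin (n + 1)} {k : ℕ} (h : IsExchange v w S f)
include h

theorem lt : v < w := Fin.lt_def.2 (by have := h.succ; omega)

theorem lt_of_mem_children (ht : t ∈ (children f v).erase w) : w < t := by
  obtain ⟨hne, ht⟩ := Finset.mem_erase.1 ht
  obtain ⟨ht2, htv⟩ := mem_children.1 ht
  have hlt := (h.valid.2 t ht2).2
  rw [htv] at hlt
  have hsucc := h.succ
  have hne : t.val ≠ w.val := fun htw => hne (Fin.ext htw)
  exact Fin.lt_def.2 (by omega)

theorem lt_of_mem (ht : t ∈ S) : w < t := h.lt_of_mem_children (h.subset ht)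

theorem parent_eq (ht : t ∈ S) : f t = v :=
  (mem_children.1 (Finset.mem_of_mem_erase (h.subset ht))).2

theorem exchange_valid : ValidPF n (exchange v w S f) := by
  obtain ⟨hzero, hpos⟩ := h.valid
  have hw := mem_children.1 h.right_mem_children
  have hv := (hpos w hw.1).1
  rw [hw.2] at hv
  have hlt := Fin.lt_def.1 h.lt
  refine ⟨fun t ht => ?_, fun t ht => ?_⟩
  · rw [exchange_of_le (Fin.le_def.2 (by omega))]
    exact hzero t ht
  · have hft := hpos t ht
    unfold exchange
    split_ifs with hle
    · exact hft
    · rw [Equiv.swap_apply_def]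
      have hwt := Fin.lt_def.1 (not_le.1 (not_or.1 hle).1)
      grind

theorem isExchange_exchange : IsExchange v w S (exchange v w S f) where
  valid := h.exchange_valid
  succ := h.succ
  right_mem_children := by
    rw [mem_children, exchange_of_le le_rfl]
    exact mem_children.1 h.right_mem_children
  subset t ht := by
    have hmem := h.subset ht
    rw [Finset.mem_erase, mem_children] at hmem ⊢
    rwa [exchange_of_mem ht]

theorem children_exchange_right :
    children (exchange v w S f) w = (children f v).erase w \ S := by
  ext t
  rw [mem_children, Finset.mem_sdiff]
  by_cases hS : t ∈ S
  · rw [exchange_of_mem hS, h.parent_eq hS]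
    simp [h.lt.ne, hS]
  by_cases htw : t ≤ w
  · rw [exchange_of_le htw]
    have hnot : t ∉ (children f v).erase w := fun ht => (h.lt_of_mem_children ht).not_ge htw
    simp only [hnot, false_and, iff_false, not_and]
    exact fun ht hft => (Fin.lt_def.2 (h.valid.2 t ht).2).not_ge (hft.symm ▸ htw)
  · rw [exchange_of_lt_of_notMem (not_le.1 htw) hS, Finset.mem_erase, mem_children,
      ← Equiv.eq_symm_apply, Equiv.symm_swap, Equiv.swap_apply_right]
    simp [hS, (not_le.1 htw).ne']

theorem left_le_of_inCore (ht : InCore v w S f t) : v ≤ t := by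
  cases ht with
  | left => exact le_rfl
  | right => exact h.lt.le
  | step hwt => exact (h.lt.trans hwt).le

theorem notMem_of_inCore (ht : InCore v w S f t) : t ∉ S := fun htS => by
  have hwt := h.lt_of_mem htS
  cases ht with
  | left => exact hwt.not_gt h.lt
  | right => exact hwt.false
  | step _ hS => exact hS htS

theorem parent_lt (ht : 2 ≤ t.val) : f t < t := Fin.lt_def.2 (h.valid.2 t ht).2

theorem mem_of_parent_inCore (ht : 2 ≤ t.val) (htC : ¬ InCore v w S f t)
    (hft : InCore v w S f (f t)) : t ∈ S := by
  have hvt : v < t := (h.left_le_of_inCore hft).trans_lt (h.parent_lt ht)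
  have hne : t ≠ w := fun htw => htC (htw ▸ .right)
  have hwt : w < t := by
    have := h.succ
    omega
  exact by_contra fun hS => htC (.step hwt hS hft)

theorem eq_left_of_parent_not_inCore (htC : InCore v w S f t) (hft : ¬ InCore v w S f (f t)) :
    t = v := by
  cases htC with
  | left => rfl
  | right => exact absurd ((mem_children.1 h.right_mem_children).2 ▸ .left) hft
  | step _ _ hcore => exact absurd hcore hft

theorem inCore_exchange_swap (ht : InCore v w S f t) :
    InCore v w S (exchange v w S f) (Equiv.swap v w t) := by
  induction ht with
  | left => rw [Equiv.swap_apply_left]; exact .right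
  | right => rw [Equiv.swap_apply_right]; exact .left
  | @step t hwt hS _ ih =>
    rw [Equiv.swap_apply_of_ne_of_ne (h.lt.trans hwt).ne' hwt.ne']
    exact .step hwt hS (by rwa [exchange_of_lt_of_notMem hwt hS])

theorem inCore_exchange_swap_iff :
    InCore v w S (exchange v w S f) (Equiv.swap v w t) ↔ InCore v w S f t := by
  refine ⟨fun ht => ?_, h.inCore_exchange_swap⟩
  simpa [exchange_exchange] using h.isExchange_exchange.inCore_exchange_swap ht

theorem comap_adj_swap_parent (ht : 2 ≤ t.val) :
    ((treeGraphPF n (exchange v w S f)).comap (Equiv.swap v w)).Adj (Equiv.swap v w t)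
      (Equiv.swap v w (exchange v w S f t)) := by
  simpa using treeGraphPF_adj_parent h.exchange_valid ht

theorem comap_adj_parent (ht : 2 ≤ t.val) (hv : t ≠ v) (hS : t ∉ S) :
    ((treeGraphPF n (exchange v w S f)).comap (Equiv.swap v w)).Adj t (f t) := by
  have hadj := h.comap_adj_swap_parent ht
  rcases lt_trichotomy t w with htw | rfl | hwt
  · have hft := h.parent_lt ht
    have htv : t < v := by
      have := h.succ
      omega
    rwa [exchange_of_le htw.le, Equiv.swap_apply_of_ne_of_ne hv htw.ne,
      Equiv.swap_apply_of_ne_of_ne (hft.trans htv).ne (hft.trans htw).ne] at hadj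
  · have hft := (mem_children.1 h.right_mem_children).2
    rw [exchange_of_le le_rfl, hft, Equiv.swap_apply_left, Equiv.swap_apply_right] at hadj
    exact hft.symm ▸ hadj.symm
  · rwa [exchange_of_lt_of_notMem hwt hS, Equiv.swap_apply_self,
      Equiv.swap_apply_of_ne_of_ne hv hwt.ne'] at hadj

theorem comap_adj_right_of_mem (ht : t ∈ S) :
    ((treeGraphPF n (exchange v w S f)).comap (Equiv.swap v w)).Adj t w := by
  have hwt := h.lt_of_mem ht
  have ht2 : 2 ≤ t.val := (mem_children.1 (Finset.mem_of_mem_erase (h.subset ht))).1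
  have hadj := h.comap_adj_swap_parent ht2
  rwa [exchange_of_mem ht, h.parent_eq ht, Equiv.swap_apply_left,
    Equiv.swap_apply_of_ne_of_ne (h.lt.trans hwt).ne' hwt.ne'] at hadj

theorem comap_adj_right_parent_left (hv : 2 ≤ v.val) :
    ((treeGraphPF n (exchange v w S f)).comap (Equiv.swap v w)).Adj w (f v) := by
  have hfv := h.parent_lt hv
  have hadj := h.comap_adj_swap_parent hv
  rwa [exchange_of_le h.lt.le, Equiv.swap_apply_left,
    Equiv.swap_apply_of_ne_of_ne hfv.ne (hfv.trans h.lt).ne] at hadj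

theorem branchMove : BranchMove (treeGraphPF n f)
    ((treeGraphPF n (exchange v w S f)).comap (Equiv.swap v w)) {x | ¬ InCore v w S f x} v w where
  source_notMem hv := hv .left
  target_notMem hw := hw .right
  adj := by
    obtain ⟨hw2, hwv⟩ := mem_children.1 h.right_mem_children
    exact hwv ▸ (treeGraphPF_adj_parent h.valid hw2).symm
  adj_inside x y hx hy hxy := by
    have hparent {t : Fin (n + 1)} (ht2 : 2 ≤ t.val) (ht : ¬ InCore v w S f t)
        (hft : ¬ InCore v w S f (f t)) :
        ((treeGraphPF n (exchange v w S f)).comap (Equiv.swap v w)).Adj t (f t) :=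
      h.comap_adj_parent ht2 (fun htv => ht (htv ▸ .left))
        (fun htS => hft ((h.parent_eq htS).symm ▸ .left))
    obtain ⟨-, ⟨hy2, rfl⟩ | ⟨hx2, rfl⟩⟩ := treeGraphPF_adj.1 hxy
    · exact (hparent hy2 hy hx).symm
    · exact hparent hx2 hx hy
  adj_outside x y hx hy hxy := by
    have hparent {t : Fin (n + 1)} (ht2 : 2 ≤ t.val) (ht : InCore v w S f t)
        (hft : InCore v w S f (f t)) :
        ((treeGraphPF n (exchange v w S f)).comap (Equiv.swap v w)).Adj t (f t) :=
      h.comap_adj_parent ht2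
        (by rintro rfl; exact (h.parent_lt ht2).not_ge (h.left_le_of_inCore hft))
        (h.notMem_of_inCore ht)
    obtain ⟨-, ⟨hy2, rfl⟩ | ⟨hx2, rfl⟩⟩ := treeGraphPF_adj.1 hxy
    · exact (hparent hy2 (not_not.1 hy) (not_not.1 hx)).symm
    · exact hparent hx2 (not_not.1 hx) (not_not.1 hy)
  eq_source c x hc hx hcx := by
    obtain ⟨-, ⟨-, rfl⟩ | ⟨hc2, rfl⟩⟩ := treeGraphPF_adj.1 hcx
    · exact h.eq_left_of_parent_not_inCore (not_not.1 hx) hc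
    · exact h.parent_eq (h.mem_of_parent_inCore hc2 hc (not_not.1 hx))
  adj_target c hc hcv := by
    obtain ⟨-, ⟨hv2, rfl⟩ | ⟨hc2, hcv⟩⟩ := treeGraphPF_adj.1 hcv
    · exact (h.comap_adj_right_parent_left hv2).symm
    · exact h.comap_adj_right_of_mem (h.mem_of_parent_inCore hc2 hc (hcv ▸ .left))

theorem branchMove_symm : BranchMove ((treeGraphPF n (exchange v w S f)).comap (Equiv.swap v w))
    (treeGraphPF n f) {x | ¬ InCore v w S f x} w v := by
  have hmove := h.isExchange_exchange.branchMove.comap (Equiv.swap v w)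
  have hbranch : Equiv.swap v w ⁻¹' {x | ¬ InCore v w S (exchange v w S f) x} =
      {x | ¬ InCore v w S f x} := Set.ext fun _ => not_congr h.inCore_exchange_swap_iff
  rwa [hbranch, exchange_exchange, SimpleGraph.comap_comap, Equiv.symm_swap,
    Equiv.swap_apply_left, Equiv.swap_apply_right, ← Equiv.coe_trans, Equiv.swap_swap,
    Equiv.coe_refl, SimpleGraph.comap_id] at hmove

theorem BCPF_sub_add_BCPF_exchange_sub_nonneg (k : ℕ) :
    0 ≤ (BCPF n f k v - BCPF n f k w) +
      (BCPF n (exchange v w S f) k v - BCPF n (exchange v w S f) k w) := by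
  simpa only [BCPF_eq_betweenness, betweenness_comap, Equiv.swap_apply_left,
    Equiv.swap_apply_right] using
      h.branchMove.betweenness_sub_add_betweenness_sub_nonneg h.branchMove_symm k

theorem BCPF_sub_add_BCPF_exchange_sub_pos (hk : 2 ≤ k) (hc : ¬ InCore v w S f c)
    (hcv : (treeGraphPF n f).Adj c v) :
    0 < (BCPF n f k v - BCPF n f k w) +
      (BCPF n (exchange v w S f) k v - BCPF n (exchange v w S f) k w) := by
  simpa only [BCPF_eq_betweenness, betweenness_comap, Equiv.swap_apply_left,
    Equiv.swap_apply_right] using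
      h.branchMove.betweenness_sub_add_betweenness_sub_pos h.branchMove_symm hk hc hcv

end IsExchange

/-- The share of the term of `S` when the factor `(children f v).card !` of `treeWeight f` is expanded
as a sum over the sets `S` of children of `v` other than `w`. As `(children f v).card - 1 - S.card` is
the number of children of `w` after the exchange, it is written symmetrically in `f` and
`exchange v w S f`. -/
def exchangeWeight (v w : Fin (n + 1)) (S : Finset (Fin (n + 1)))
    (f : Fin (n + 1) → Fin (n + 1)) : ℚ :=
  S.card.factorial *
    ((children (exchange v w S f) w).card.factorial * (children f w).card.factorial) *
      ∏ u ∈ {v, w}ᶜ, ((children f u).card.factorial : ℚ)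

theorem exchangeWeight_pos (v w : Fin (n + 1)) (S : Finset (Fin (n + 1)))
    (f : Fin (n + 1) → Fin (n + 1)) : 0 < exchangeWeight v w S f := by
  have hfactorial (s : Finset (Fin (n + 1))) : (0 : ℚ) < s.card.factorial :=
    Nat.cast_pos.2 (Nat.factorial_pos _)
  exact mul_pos (mul_pos (hfactorial _) (mul_pos (hfactorial _) (hfactorial _)))
    (Finset.prod_pos fun u _ => hfactorial _)

theorem exchangeWeight_exchange (v w : Fin (n + 1)) (S : Finset (Fin (n + 1)))
    (f : Fin (n + 1) → Fin (n + 1)) :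
    exchangeWeight v w S (exchange v w S f) = exchangeWeight v w S f := by
  have hother : ∀ u ∈ ({v, w}ᶜ : Finset (Fin (n + 1))),
      ((children (exchange v w S f) u).card.factorial : ℚ) = (children f u).card.factorial := by
    intro u hu
    rw [Finset.mem_compl, Finset.mem_insert, Finset.mem_singleton, not_or] at hu
    rw [children_exchange_of_ne hu.1 hu.2]
  rw [exchangeWeight, exchangeWeight, exchange_exchange, Finset.prod_congr rfl hother,
    mul_comm ((children f w).card.factorial : ℚ)]

theorem treeWeight_eq_sum_exchangeWeight (hf : ValidPF n f) (hsucc : w.val = v.val + 1)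
    (hw : w ∈ children f v) :
    treeWeight f = ∑ S ∈ ((children f v).erase w).powerset, exchangeWeight v w S f := by
  have hvw : v ≠ w := fun hvw => by
    rw [hvw] at hsucc
    omega
  have hcard (S) (hS : S ∈ ((children f v).erase w).powerset) :
      (children (exchange v w S f) w).card = ((children f v).erase w).card - S.card := by
    have hS := Finset.mem_powerset.1 hS
    rw [IsExchange.children_exchange_right ⟨hf, hsucc, hw, hS⟩, Finset.card_sdiff_of_subset hS]
  have hsum := congrArg (Nat.cast : ℕ → ℚ)
    (sum_powerset_factorial_mul_factorial ((children f v).erase w))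
  rw [Finset.card_erase_add_one hw, Nat.cast_sum] at hsum
  rw [treeWeight, ← Finset.prod_mul_prod_compl {v, w}, Finset.prod_pair hvw, ← hsum,
    mul_assoc, Finset.sum_mul]
  refine Finset.sum_congr rfl fun S hS => ?_
  rw [exchangeWeight, hcard S hS, Nat.cast_mul]
  ring

theorem sum_treeWeight_mul_eq_sum_exchangeWeight_mul (hv : 1 ≤ v.val) (hsucc : w.val = v.val + 1)
    (δ : (Fin (n + 1) → Fin (n + 1)) → ℚ) :
    ∑ f ∈ Finset.univ.filter (fun f => ValidPF n f ∧ f w = v), treeWeight f * δ f =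
      ∑ p ∈ Finset.univ.filter (fun p : (Fin (n + 1) → Fin (n + 1)) × Finset (Fin (n + 1)) =>
        IsExchange v w p.2 p.1), exchangeWeight v w p.2 p.1 * δ p.1 := by
  have hmem {f : Fin (n + 1) → Fin (n + 1)} (hfw : f w = v) :
      w ∈ children f v := mem_children.2 ⟨by omega, hfw⟩
  rw [Finset.sum_finset_product _ (Finset.univ.filter (fun f => ValidPF n f ∧ f w = v))
    fun f => ((children f v).erase w).powerset]
  · refine Finset.sum_congr rfl fun f hf => ?_
    obtain ⟨-, hf, hfw⟩ := Finset.mem_filter.1 hf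
    rw [treeWeight_eq_sum_exchangeWeight hf hsucc (hmem hfw), Finset.sum_mul]
  · rintro ⟨f, S⟩
    simp only [Finset.mem_filter, Finset.mem_univ, true_and, Finset.mem_powerset]
    exact ⟨fun h => ⟨⟨h.valid, (mem_children.1 h.right_mem_children).2⟩, h.subset⟩,
      fun ⟨⟨hf, hfw⟩, hS⟩ => ⟨hf, hsucc, hmem hfw, hS⟩⟩

theorem exists_isExchange_adj (hn : 3 ≤ n) (hv : 1 ≤ v.val) (hsucc : w.val = v.val + 1) :
    ∃ f S c, IsExchange v w S f ∧ ¬ InCore v w S f c ∧ (treeGraphPF n f).Adj c v := by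
  let f : Fin (n + 1) → Fin (n + 1) := fun t =>
    if t.val < 2 then 0 else if t = w then v else ⟨1, by omega⟩
  have hparent {t : Fin (n + 1)} (ht : 2 ≤ t.val) :
      f t = if t = w then v else ⟨1, by omega⟩ := if_neg (by omega)
  have hf : ValidPF n f := by
    refine ⟨fun t ht => congrArg Fin.val (if_pos ht), fun t ht => ?_⟩
    rw [hparent ht]
    split_ifs with htw
    · rw [htw]
      omega
    · exact ⟨le_rfl, ht⟩
  have hw : w ∈ children f v := mem_children.2 ⟨by omega, (hparent (by omega)).trans (if_pos rfl)⟩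
  by_cases hv2 : 2 ≤ v.val
  · have hexchange : IsExchange v w ∅ f := ⟨hf, hsucc, hw, Finset.empty_subset _⟩
    exact ⟨f, ∅, f v, hexchange,
      fun hcore => (hexchange.parent_lt hv2).not_ge (hexchange.left_le_of_inCore hcore),
      (treeGraphPF_adj_parent hf hv2).symm⟩
  · let t : Fin (n + 1) := ⟨3, by omega⟩
    have htw : t ≠ w := Fin.ne_of_val_ne (show 3 ≠ w.val by omega)
    have ht2 : 2 ≤ t.val := show 2 ≤ 3 by omega
    have hft : f t = v :=
      ((hparent ht2).trans (if_neg htw)).trans (Fin.ext (show 1 = v.val by omega))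
    have hexchange : IsExchange v w {t} f := ⟨hf, hsucc, hw, Finset.singleton_subset_iff.2
      (Finset.mem_erase.2 ⟨htw, mem_children.2 ⟨ht2, hft⟩⟩)⟩
    exact ⟨f, {t}, t, hexchange,
      fun hcore => hexchange.notMem_of_inCore hcore (Finset.mem_singleton_self t),
      hft ▸ treeGraphPF_adj_parent hf ht2⟩

theorem sum_treeWeight_mul_BCPF_sub_pos (hn : 3 ≤ n) {k : ℕ} (hk : 2 ≤ k) (hv : 1 ≤ v.val)
    (hsucc : w.val = v.val + 1) :
    0 < ∑ f ∈ Finset.univ.filter (fun f => ValidPF n f ∧ f w = v),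
      treeWeight f * (BCPF n f k v - BCPF n f k w) := by
  rw [sum_treeWeight_mul_eq_sum_exchangeWeight_mul hv hsucc fun f => BCPF n f k v - BCPF n f k w]
  refine pos_of_mul_pos_right (a := 2) ?_ zero_le_two
  rw [two_mul_sum_mul_eq_of_involution (e := fun p => (exchange v w p.2 p.1, p.2))
    (fun p hp => ?_) (fun p => by rw [exchange_exchange])
    (fun p _ => exchangeWeight_exchange v w p.2 p.1) fun p => BCPF n p.1 k v - BCPF n p.1 k w]
  · obtain ⟨f, S, c, hexchange, hc, hcv⟩ := exists_isExchange_adj hn hv hsucc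
    refine Finset.sum_pos' (fun p hp => ?_) ⟨(f, S), by simpa using hexchange, ?_⟩
    · exact mul_nonneg (exchangeWeight_pos _ _ _ _).le
        ((Finset.mem_filter.1 hp).2.BCPF_sub_add_BCPF_exchange_sub_nonneg k)
    · exact mul_pos (exchangeWeight_pos _ _ _ _)
        (hexchange.BCPF_sub_add_BCPF_exchange_sub_pos hk hc hcv)
  · exact Finset.mem_filter.2 ⟨Finset.mem_univ _, (Finset.mem_filter.1 hp).2.isExchange_exchange⟩

end Exchange

section Expectation

variable {n k : ℕ}

/-- The expected `k`-betweenness centrality of `v` in the scale-free random tree on `1, …, n`. -/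
def expectedBC (n k : ℕ) (v : Fin (n + 1)) : ℚ :=
  ∑ f ∈ Finset.univ.filter (fun f => ValidPF n f), probPF n f * BCPF n f k v

theorem expectedBC_sub_expectedBC (v w : Fin (n + 1)) :
    expectedBC n k v - expectedBC n k w = (∑ f ∈ Finset.univ.filter (fun f => ValidPF n f),
      treeWeight f * (BCPF n f k v - BCPF n f k w)) / totalWeight n := by
  rw [expectedBC, expectedBC, ← Finset.sum_sub_distrib, Finset.sum_div]
  refine Finset.sum_congr rfl fun f _ => ?_
  rw [probPF_eq_treeWeight_div]
  ring

theorem expectedBC_succ_lt (hn : 3 ≤ n) (hk : 2 ≤ k) {v w : Fin (n + 1)} (hv : 1 ≤ v.val)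
    (hsucc : w.val = v.val + 1) : expectedBC n k w < expectedBC n k v := by
  rw [← sub_pos, expectedBC_sub_expectedBC,
    ← Finset.sum_filter_add_sum_filter_not _ fun f => f w = v, Finset.filter_filter,
    Finset.filter_filter, sum_treeWeight_mul_BCPF_sub_eq_zero hv hsucc, add_zero]
  exact div_pos (sum_treeWeight_mul_BCPF_sub_pos hn hk hv hsucc) (totalWeight_pos n)

theorem expectedBC_strictAntiOn (hn : 3 ≤ n) (hk : 2 ≤ k) :
    StrictAntiOn (expectedBC n k) {v | 1 ≤ v.val} := by
  refine strictAntiOn_of_succ_lt ⟨fun a ha b _ c hc => ?_⟩ fun v hmax hv _ => ?_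
  · exact (show 1 ≤ a.val from ha).trans hc.1
  · have hcovBy := Fin.covBy_iff.1 (Order.covBy_succ_of_not_isMax hmax)
    exact expectedBC_succ_lt hn hk hv (Nat.covBy_iff_add_one_eq.1 hcovBy).symm

end Expectation

/-- In the scale-free random recursive tree `T_n` (`n ≥ 3`), for vertices
`1 ≤ v < w ≤ n` and `2 ≤ k < n`, the expected `k`-betweenness centrality of `v`
strictly exceeds that of `w`. -/
theorem expected_BC_strictly_decreasing (n : ℕ) (hn : 3 ≤ n) (v w : Fin (n+1))
    (hv : 1 ≤ v.val) (hvw : v < w) (k : ℕ) (hk2 : 2 ≤ k) (hkn : k < n) :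
    ∑ f ∈ Finset.univ.filter (fun f : Fin (n+1) → Fin (n+1) => ValidPF n f),
        probPF n f * BCPF n f k v
      > ∑ f ∈ Finset.univ.filter (fun f : Fin (n+1) → Fin (n+1) => ValidPF n f),
        probPF n f * BCPF n f k w := by
  exact expectedBC_strictAntiOn hn hk2 hv (hv.trans (Fin.lt_def.1 hvw).le) hvw

end
end

section
/- Let n ≥ 2 and let x_0, x_1, …, x_p (p ≥ 1) be distinct vertices in {1,…,n} forming a valley-shaped sequence: there is an index m with 0 ≤ m ≤ p such that x_0 > x_1 > … > x_m and x_m < x_{m+1} < … < x_p. Set a = min(x_0, x_p), b = max(x_0, x_p), c = x_m, L = {x_q : 0 < q < p, c < x_q < a}, and R = {x_q : 0 < q < p, a < x_q < b}. Then the probability (under the scale-free random tree distribution P_n) that x_0, x_1, …, x_p is a path in T_n^f, i.e. that f(max(x_q, x_{q+1})) = min(x_q, x_{q+1}) for all 0 ≤ q < p, equals: (2/(2c−1)) · (1/(2b−2)) · ∏_{i∈L} 1/(2i−1) · ∏_{i∈R} 1/(2i−2) · ∏_{t=a+1}^{b} (2t−2)/(2t−3) if a ≠ c, and (1/(2b−2))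 · ∏_{i∈R} 1/(2i−2) · ∏_{t=a+1}^{b} (2t−2)/(2t−3) if a = c. -/
open scoped Classical

noncomputable section

/-- Extension of a parent function to the natural numbers (0 outside the domain). -/
def fext (n : ℕ) (f : Fin (n+1) → Fin (n+1)) (t : ℕ) : ℕ :=
  if h : t < n + 1 then (f ⟨t, h⟩).val else 0

/-!
Reveal the vertices one at a time, and give a vertex of current degree `d` that still awaits `k`
prescribed children the weight `d (d + 1) ⋯ (d + k - 1)`. When the next of these children attaches,
with probability `d / (2t - 3)`, the weight becomes `(d + 1) ⋯ (d + k - 1)`, so the degrees cancel.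
Hence the product of the weights over the tree, set to zero once a prescribed edge is missed, is a
martingale up to deterministic factors: at time `t` the factor is `1 / (2t - 3)` if `t` is a
prescribed child and `(2t - 3 + e) / (2t - 3)` otherwise, where `e` is the number of prescribed
edges joining earlier vertices to `t` or later ones, times `k!` for the `k` prescribed children of
`t`. For a valley-shaped path `e` is `2` on `(c, a]`, `1` on `(a, b]` and `0` elsewhere, only `c`
can have two prescribed children, and the product over `(c, a]` telescopes.
-/
namespace RecursiveTree

open Finset Function

/-- A parent function of a recursive tree on `{1, …, n}`, as a function on all of `ℕ` that
vanishes outside `{2, …, n}`. -/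
structure IsParentFunction (n : ℕ) (f : ℕ → ℕ) : Prop where
  eq_zero : ∀ t, t < 2 ∨ n < t → f t = 0
  one_le : ∀ t, 2 ≤ t → t ≤ n → 1 ≤ f t
  lt : ∀ t, 2 ≤ t → t ≤ n → f t < t

/-- The finite set of parent functions of recursive trees on `{1, …, n}`, obtained by extending
by zero the parent functions encoded on `Fin (n + 1)`. -/
def parentFunctions (n : ℕ) : Finset (ℕ → ℕ) :=
  ({f | ValidPF n f} : Finset (Fin (n + 1) → Fin (n + 1))).image (fext n)

/-- The degree of `v`, counting the virtual edge at `1`, in the tree on `{1, …, m}`. -/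
def degree (f : ℕ → ℕ) (m v : ℕ) : ℕ := 1 + #{s ∈ Icc 2 m | f s = v}

/-- The probability that the first `m` vertices of the scale-free tree attach according to `f`. -/
def weight (f : ℕ → ℕ) (m : ℕ) : ℚ :=
  ∏ t ∈ Icc 2 m, (degree f (t - 1) (f t) : ℚ) / (2 * t - 3)

lemma fext_val {n : ℕ} (f : Fin (n + 1) → Fin (n + 1)) (t : Fin (n + 1)) :
    fext n f t = f t :=
  dif_pos t.isLt

lemma fext_injective (n : ℕ) : Injective (fext n) := fun f g h ↦
  funext fun t ↦ Fin.ext <| by rw [← fext_val, ← fext_val, h]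

lemma degree_fext {n m : ℕ} (hm : m ≤ n) (f : Fin (n + 1) → Fin (n + 1)) (v : Fin (n + 1)) :
    degree (fext n f) m v = degPF n f m v := by
  refine congrArg (1 + ·) (card_nbij Fin.val ?_ Fin.val_injective.injOn ?_).symm
  · intro s hs
    obtain ⟨hs₂, hsm, rfl⟩ := (mem_filter.1 hs).2
    exact mem_filter.2 ⟨mem_Icc.2 ⟨hs₂, hsm⟩, fext_val f s⟩
  · intro s hs
    obtain ⟨hs, hfs⟩ := mem_filter.1 hs
    obtain ⟨hs₂, hsm⟩ := mem_Icc.1 hs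
    refine ⟨⟨s, by lia⟩, mem_filter.2 ⟨mem_univ _, hs₂, hsm, Fin.ext ?_⟩, rfl⟩
    rw [← fext_val, hfs]

lemma weight_fext {n : ℕ} (f : Fin (n + 1) → Fin (n + 1)) :
    weight (fext n f) n = probPF n f := by
  refine (prod_nbij Fin.val ?_ Fin.val_injective.injOn ?_ ?_).symm
  · intro t ht
    simp only [mem_filter, mem_univ, true_and, mem_Icc] at ht ⊢
    lia
  · intro t ht
    simp only [coe_Icc, Set.mem_Icc] at ht
    exact ⟨⟨t, by lia⟩, by simpa using ht.1, rfl⟩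
  · intro t _
    rw [fext_val, degree_fext (by lia)]

lemma sum_probPF_filter_fext (n : ℕ) (Q : (ℕ → ℕ) → Prop) [DecidablePred Q] :
    ∑ f with ValidPF n f ∧ Q (fext n f), probPF n f =
      ∑ f ∈ parentFunctions n with Q f, weight f n := by
  rw [parentFunctions, filter_image, sum_image (fext_injective n).injOn, filter_filter]
  exact sum_congr rfl fun f _ ↦ (weight_fext f).symm

lemma isParentFunction_fext {n : ℕ} {f : Fin (n + 1) → Fin (n + 1)} (hf : ValidPF n f) :
    IsParentFunction n (fext n f) where
  eq_zero t ht := by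
    by_cases h : t < n + 1
    · exact (dif_pos h).trans (hf.1 ⟨t, h⟩ (by simp only; lia))
    · exact dif_neg h
  one_le t h₂ hn := fext_val f ⟨t, by lia⟩ ▸ (hf.2 ⟨t, by lia⟩ h₂).1
  lt t h₂ hn := fext_val f ⟨t, by lia⟩ ▸ (hf.2 ⟨t, by lia⟩ h₂).2

namespace IsParentFunction

variable {m n v : ℕ} {f : ℕ → ℕ}

lemma apply_le (hf : IsParentFunction n f) (t : ℕ) : f t ≤ n := by
  by_cases h : t < 2 ∨ n < t
  · simp [hf.eq_zero t h]
  · have := hf.lt t (by lia) (by lia)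
    lia

lemma mem_parentFunctions (hf : IsParentFunction n f) : f ∈ parentFunctions n := by
  refine mem_image.2 ⟨fun t ↦ ⟨f t, Nat.lt_succ_of_le (hf.apply_le t)⟩, ?_, ?_⟩
  · exact mem_filter.2 ⟨mem_univ _, fun t ht ↦ hf.eq_zero t (.inl ht),
      fun t ht ↦ ⟨hf.one_le t ht (by lia), hf.lt t ht (by lia)⟩⟩
  · funext t
    by_cases h : t < n + 1
    · exact dif_pos h
    · exact (dif_neg h).trans (hf.eq_zero t (by lia)).symm

lemma update_succ (hf : IsParentFunction m f) (hv : v ∈ Icc 1 m) :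
    IsParentFunction (m + 1) (update f (m + 1) v) := by
  rw [mem_Icc] at hv
  constructor
  · intro t ht
    rw [update_of_ne (by lia), hf.eq_zero t (by lia)]
  all_goals
    intro t h₂ htm
    obtain rfl | hne := eq_or_ne t (m + 1)
    · simp only [update_self]; lia
    · rw [update_of_ne hne]
      first | exact hf.one_le t h₂ (by lia) | exact hf.lt t h₂ (by lia)

lemma update_succ_zero (hf : IsParentFunction (m + 1) f) :
    IsParentFunction m (update f (m + 1) 0) where
  eq_zero t ht := by
    obtain rfl | hne := eq_or_ne t (m + 1)
    · exact update_self ..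
    · rw [update_of_ne hne, hf.eq_zero t (by lia)]
  one_le t h₂ htm := by
    rw [update_of_ne (by lia)]
    exact hf.one_le t h₂ (by lia)
  lt t h₂ htm := by
    rw [update_of_ne (by lia)]
    exact hf.lt t h₂ (by lia)

lemma degree_eq_one (hf : IsParentFunction m f) (hv : m ≤ v) : degree f m v = 1 := by
  rw [degree, Nat.add_eq_left, card_eq_zero, filter_eq_empty_iff]
  intro s hs
  have := hf.lt s (mem_Icc.1 hs).1 (mem_Icc.1 hs).2
  have := (mem_Icc.1 hs).2
  lia

lemma sum_degree (hf : IsParentFunction m f) : ∑ v ∈ Icc 1 m, degree f m v = 2 * m - 1 := by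
  have fibres : #(Icc 2 m) = ∑ v ∈ Icc 1 m, #{s ∈ Icc 2 m | f s = v} := by
    refine card_eq_sum_card_fiberwise fun s hs ↦ ?_
    obtain ⟨h₂, hsm⟩ := Set.mem_Icc.1 (coe_Icc 2 m ▸ hs)
    exact mem_coe.2 (mem_Icc.2 ⟨hf.one_le s h₂ hsm, hf.apply_le s⟩)
  simp only [degree, sum_add_distrib, ← fibres, sum_const, Nat.card_Icc, smul_eq_mul]
  lia

end IsParentFunction

lemma mem_parentFunctions {n : ℕ} {f : ℕ → ℕ} : f ∈ parentFunctions n ↔ IsParentFunction n f := by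
  refine ⟨fun hf ↦ ?_, IsParentFunction.mem_parentFunctions⟩
  obtain ⟨g, hg, rfl⟩ := mem_image.1 hf
  exact isParentFunction_fext (mem_filter.1 hg).2

lemma parentFunctions_one : parentFunctions 1 = {0} := by
  ext f
  rw [mem_parentFunctions, mem_singleton]
  refine ⟨fun hf ↦ funext fun t ↦ hf.eq_zero t (by lia), ?_⟩
  rintro rfl
  exact ⟨fun _ _ ↦ rfl, fun t _ _ ↦ by lia, fun t _ _ ↦ by lia⟩

lemma sum_parentFunctions_succ {M : Type*} [AddCommMonoid M] (m : ℕ) (hm : 1 ≤ m)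
    (φ : (ℕ → ℕ) → M) :
    ∑ f ∈ parentFunctions (m + 1), φ f =
      ∑ f ∈ parentFunctions m, ∑ v ∈ Icc 1 m, φ (update f (m + 1) v) := by
  rw [← sum_product']
  refine sum_nbij' (fun f ↦ (update f (m + 1) 0, f (m + 1))) (fun p ↦ update p.1 (m + 1) p.2)
    ?_ ?_ ?_ ?_ ?_
  · intro f hf
    rw [mem_parentFunctions] at hf
    have := hf.one_le (m + 1) (by lia) le_rfl
    have := hf.lt (m + 1) (by lia) le_rfl
    exact mem_product.2 ⟨mem_parentFunctions.2 hf.update_succ_zero, mem_Icc.2 (by lia)⟩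
  · rintro ⟨f, v⟩ hfv
    obtain ⟨hf, hv⟩ := mem_product.1 hfv
    exact mem_parentFunctions.2 ((mem_parentFunctions.1 hf).update_succ hv)
  · intro f _
    simp
  · rintro ⟨f, v⟩ hfv
    have hf := (mem_parentFunctions.1 (mem_product.1 hfv).1).eq_zero (m + 1) (by lia)
    simp [← hf]
  · intro f _
    simp

lemma degree_update_of_lt {f : ℕ → ℕ} {m t v u : ℕ} (h : m < t) :
    degree (update f t v) m u = degree f m u := by
  refine congrArg (1 + #·) (filter_congr fun s hs ↦ ?_)
  rw [update_of_ne (by have := (mem_Icc.1 hs).2; lia)]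

lemma degree_update_succ {f : ℕ → ℕ} {m v u : ℕ} (hm : 1 ≤ m) :
    degree (update f (m + 1) v) (m + 1) u = degree f m u + if u = v then 1 else 0 := by
  rw [← degree_update_of_lt (f := f) (Nat.lt_succ_self m) (v := v), degree, degree,
    ← insert_Icc_right_eq_Icc_add_one (by lia), filter_insert, update_self]
  split_ifs with h₁ h₂ h₂
  · rw [card_insert_of_notMem (by simp), add_assoc]
  · exact absurd h₁.symm h₂
  · exact absurd h₂.symm h₁
  · rfl

lemma weight_update_succ {f : ℕ → ℕ} {m v : ℕ} (hm : 1 ≤ m) :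
    weight (update f (m + 1) v) (m + 1) = weight f m * (degree f m v / (2 * m - 1)) := by
  rw [weight, weight, prod_Icc_succ_top (by lia)]
  congr 1
  · refine prod_congr rfl fun t ht ↦ ?_
    rw [mem_Icc] at ht
    rw [degree_update_of_lt (by lia), update_of_ne (by lia)]
  · rw [update_self, Nat.add_sub_cancel, degree_update_of_lt (by lia)]
    push_cast
    ring

lemma mul_prod_ascFactorial_add_ite {ι : Type*} [DecidableEq ι] {s : Finset ι} {i : ι}
    (hi : i ∈ s) (d k : ι → ℕ) :
    d i * ∏ j ∈ s, (d j + if j = i then 1 else 0).ascFactorial (k j) =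
      ∏ j ∈ s, (d j).ascFactorial (k j + if j = i then 1 else 0) := by
  have hdi : d i = ∏ j ∈ s, if j = i then d j else 1 := by rw [prod_ite_eq' s i d, if_pos hi]
  rw [hdi, ← prod_mul_distrib]
  refine prod_congr rfl fun j _ ↦ ?_
  split_ifs
  · rw [Nat.succ_ascFactorial, Nat.ascFactorial_succ]
  · simp only [add_zero, one_mul]

lemma prod_ascFactorial_add_ite {ι : Type*} [DecidableEq ι] {s : Finset ι} {i : ι}
    (hi : i ∈ s) (d k : ι → ℕ) :
    ∏ j ∈ s, (d j).ascFactorial (k j + if j = i then 1 else 0) =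
      (d i + k i) * ∏ j ∈ s, (d j).ascFactorial (k j) := by
  have hdi : d i + k i = ∏ j ∈ s, if j = i then d j + k j else 1 := by
    rw [prod_ite_eq' s i fun j ↦ d j + k j, if_pos hi]
  rw [hdi, ← prod_mul_distrib]
  refine prod_congr rfl fun j _ ↦ ?_
  split_ifs
  · rw [Nat.ascFactorial_succ]
  · simp only [add_zero, one_mul]

section PrescribedEdges

variable {ι : Type*} (E : Finset ι) (child parent : ι → ℕ)

/-- Every prescribed edge `child q — parent q` with `q ∈ E` whose child is among the first `m`
vertices is an edge of the tree with parent function `f`. -/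
def ContainsUpTo (m : ℕ) (f : ℕ → ℕ) : Prop :=
  ∀ q ∈ E, child q ≤ m → f (child q) = parent q

/-- The number of prescribed children of `v` that arrive after time `m`. -/
def pendingChildren (m v : ℕ) : ℕ := #{q ∈ E | m < child q ∧ parent q = v}

/-- The number of prescribed edges that join `{1, …, t - 1}` to `{t, t + 1, …}`. -/
def crossingEdges (t : ℕ) : ℕ := #{q ∈ E | parent q < t ∧ t ≤ child q}

/-- The Bollobás–Riordan potential of a tree on `{1, …, m}`: zero if the tree misses a prescribed
edge, and otherwise the product over its vertices `v` of the rising factorial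
`d (d + 1) ⋯ (d + k - 1)`, with `d` the degree of `v` and `k` its number of pending children. -/
def potential (m : ℕ) (f : ℕ → ℕ) : ℕ :=
  if ContainsUpTo E child parent m f then
    ∏ v ∈ Icc 1 m, (degree f m v).ascFactorial (pendingChildren E child parent m v)
  else 0

/-- The contribution of the arrival of `t` to the probability of the prescribed edges. -/
def arrivalFactor (t : ℕ) : ℚ :=
  (if t ∈ E.image child then 1 else 2 * (t : ℚ) - 3 + crossingEdges E child parent t) /
    (2 * t - 3)

variable {E child parent} {m n : ℕ} {f : ℕ → ℕ}

lemma containsUpTo_update_succ {v : ℕ} :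
    ContainsUpTo E child parent (m + 1) (update f (m + 1) v) ↔
      ContainsUpTo E child parent m f ∧ ∀ q ∈ E, child q = m + 1 → parent q = v := by
  refine ⟨fun h ↦ ⟨fun q hq hqm ↦ ?_, fun q hq hqm ↦ ?_⟩, fun ⟨hf, hv⟩ q hq hqm ↦ ?_⟩
  · rw [← h q hq (by lia), update_of_ne (by lia)]
  · rw [← h q hq hqm.le, hqm, update_self]
  · obtain hqm' | hqm' := eq_or_ne (child q) (m + 1)
    · rw [hqm', update_self, hv q hq hqm']
    · rw [update_of_ne hqm', hf q hq (by lia)]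

lemma pendingChildren_eq_succ_of_notMem (hm : m + 1 ∉ E.image child) (v : ℕ) :
    pendingChildren E child parent m v = pendingChildren E child parent (m + 1) v := by
  refine congrArg card (filter_congr fun q hq ↦ and_congr_left fun _ ↦ ?_)
  have : child q ≠ m + 1 := fun h ↦ hm (h ▸ mem_image_of_mem child hq)
  lia

lemma pendingChildren_eq_succ_add_of_mem (hinj : Set.InjOn child E) {q₀ : ι} (hq₀ : q₀ ∈ E)
    (hchild : child q₀ = m + 1) (v : ℕ) :
    pendingChildren E child parent m v =
      pendingChildren E child parent (m + 1) v + if v = parent q₀ then 1 else 0 := by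
  have later : ∀ q ∈ E, m < child q ↔ m + 1 < child q ∨ q = q₀ := fun q hq ↦ by
    have : child q = m + 1 ↔ q = q₀ := hchild ▸ hinj.eq_iff hq hq₀
    lia
  split_ifs with hv
  · have : {q ∈ E | m < child q ∧ parent q = v} =
        insert q₀ {q ∈ E | m + 1 < child q ∧ parent q = v} := by
      ext q
      simp only [mem_filter, mem_insert]
      grind
    rw [pendingChildren, this, card_insert_of_notMem (by simp [hchild]), pendingChildren]
  · refine congrArg card (filter_congr fun q hq ↦ and_congr_left fun hqv ↦ ?_)
    have : q ≠ q₀ := by rintro rfl; exact hv hqv.symm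
    simp [later q hq, this]

lemma sum_pendingChildren (hpos : ∀ q ∈ E, 1 ≤ parent q) (m : ℕ) :
    ∑ v ∈ Icc 1 m, pendingChildren E child parent m v = crossingEdges E child parent (m + 1) := by
  rw [crossingEdges, card_eq_sum_card_fiberwise (f := parent) (t := Icc 1 m)]
  · refine sum_congr rfl fun v hv ↦ congrArg card ?_
    rw [filter_filter]
    refine filter_congr fun q _ ↦ ?_
    rw [mem_Icc] at hv
    lia
  · intro q hq
    rw [mem_coe, mem_filter] at hq
    exact mem_coe.2 (mem_Icc.2 ⟨hpos q hq.1, by lia⟩)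

/-- The vertex `m + 1` is born with degree `1`, so it contributes `1 · 2 ⋯ k = k!`. -/
lemma prod_ascFactorial_degree_update_succ {v : ℕ} (hm : 1 ≤ m) (hf : IsParentFunction m f)
    (hv : v ∈ Icc 1 m) (k : ℕ → ℕ) :
    ∏ u ∈ Icc 1 (m + 1), (degree (update f (m + 1) v) (m + 1) u).ascFactorial (k u) =
      (∏ u ∈ Icc 1 m, (degree f m u + if u = v then 1 else 0).ascFactorial (k u)) *
        (k (m + 1)).factorial := by
  have hne : m + 1 ≠ v := by rw [mem_Icc] at hv; lia
  simp only [prod_Icc_succ_top (Nat.le_add_left 1 m), degree_update_succ hm,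
    hf.degree_eq_one (Nat.le_succ m), if_neg hne, add_zero, Nat.one_ascFactorial]

lemma degree_mul_potential_update_succ {v : ℕ} (hm : 1 ≤ m) (hf : IsParentFunction m f)
    (hv : v ∈ Icc 1 m) (hcontains : ContainsUpTo E child parent m f)
    (hchild : ∀ q ∈ E, child q = m + 1 → parent q = v) :
    degree f m v * potential E child parent (m + 1) (update f (m + 1) v) =
      (∏ u ∈ Icc 1 m, (degree f m u).ascFactorial
          (pendingChildren E child parent (m + 1) u + if u = v then 1 else 0)) *
        (pendingChildren E child parent (m + 1) (m + 1)).factorial := by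
  rw [potential, if_pos (containsUpTo_update_succ.2 ⟨hcontains, hchild⟩),
    prod_ascFactorial_degree_update_succ hm hf hv, ← mul_assoc, mul_prod_ascFactorial_add_ite hv]

lemma sum_degree_mul_potential_of_mem (hinj : Set.InjOn child E) (hpos : ∀ q ∈ E, 1 ≤ parent q)
    (hlt : ∀ q ∈ E, parent q < child q) (hm : 1 ≤ m) (hf : IsParentFunction m f)
    (hcontains : ContainsUpTo E child parent m f) (hmem : m + 1 ∈ E.image child) :
    ∑ v ∈ Icc 1 m, degree f m v * potential E child parent (m + 1) (update f (m + 1) v) =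
      potential E child parent m f *
        (pendingChildren E child parent (m + 1) (m + 1)).factorial := by
  obtain ⟨q₀, hq₀, hchild⟩ := mem_image.1 hmem
  have hparent : parent q₀ ∈ Icc 1 m := by
    have := hlt q₀ hq₀
    exact mem_Icc.2 ⟨hpos q₀ hq₀, by lia⟩
  have only_q₀ : ∀ q ∈ E, child q = m + 1 → parent q = parent q₀ := fun q hq h ↦
    congrArg parent (hinj hq hq₀ (h.trans hchild.symm))
  rw [sum_eq_single_of_mem _ hparent,
    degree_mul_potential_update_succ hm hf hparent hcontains only_q₀, potential, if_pos hcontains]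
  · simp only [pendingChildren_eq_succ_add_of_mem hinj hq₀ hchild]
  · intro v _ hv
    have missed : ¬ ContainsUpTo E child parent (m + 1) (update f (m + 1) v) := fun h ↦
      hv ((containsUpTo_update_succ.1 h).2 q₀ hq₀ hchild).symm
    rw [potential, if_neg missed, mul_zero]

lemma sum_degree_mul_potential_of_notMem (hpos : ∀ q ∈ E, 1 ≤ parent q) (hm : 1 ≤ m)
    (hf : IsParentFunction m f) (hcontains : ContainsUpTo E child parent m f)
    (hmem : m + 1 ∉ E.image child) :
    ∑ v ∈ Icc 1 m, degree f m v * potential E child parent (m + 1) (update f (m + 1) v) =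
      potential E child parent m f * (pendingChildren E child parent (m + 1) (m + 1)).factorial *
        (2 * m - 1 + crossingEdges E child parent (m + 1)) := by
  have term : ∀ v ∈ Icc 1 m,
      degree f m v * potential E child parent (m + 1) (update f (m + 1) v) =
        (degree f m v + pendingChildren E child parent m v) * (potential E child parent m f *
          (pendingChildren E child parent (m + 1) (m + 1)).factorial) := by
    intro v hv
    rw [degree_mul_potential_update_succ hm hf hv hcontains
        fun q hq h ↦ absurd (h ▸ mem_image_of_mem child hq) hmem,
      prod_ascFactorial_add_ite hv, potential, if_pos hcontains]
    simp only [pendingChildren_eq_succ_of_notMem hmem, mul_assoc]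
  rw [sum_congr rfl term, ← sum_mul, sum_add_distrib, hf.sum_degree, sum_pendingChildren hpos,
    mul_comm]

/-- Up to a deterministic factor, the potential is a martingale. -/
lemma sum_weight_mul_potential_update_succ (hinj : Set.InjOn child E)
    (hpos : ∀ q ∈ E, 1 ≤ parent q) (hlt : ∀ q ∈ E, parent q < child q) (hm : 1 ≤ m)
    (hf : IsParentFunction m f) :
    ∑ v ∈ Icc 1 m, weight (update f (m + 1) v) (m + 1) *
        potential E child parent (m + 1) (update f (m + 1) v) =
      weight f m * potential E child parent m f *
        ((pendingChildren E child parent (m + 1) (m + 1)).factorial *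
          arrivalFactor E child parent (m + 1)) := by
  have denominator : 2 * ((m + 1 : ℕ) : ℚ) - 3 = 2 * m - 1 := by push_cast; ring
  have numerator : ∑ v ∈ Icc 1 m,
        (degree f m v * potential E child parent (m + 1) (update f (m + 1) v) : ℚ) =
      potential E child parent m f * (pendingChildren E child parent (m + 1) (m + 1)).factorial *
        if m + 1 ∈ E.image child then 1
        else 2 * m - 1 + (crossingEdges E child parent (m + 1) : ℚ) := by
    by_cases hcontains : ContainsUpTo E child parent m f
    · split_ifs with hmem
      · rw [mul_one]
        exact_mod_cast sum_degree_mul_potential_of_mem hinj hpos hlt hm hf hcontains hmem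
      · have := congrArg (Nat.cast (R := ℚ))
          (sum_degree_mul_potential_of_notMem hpos hm hf hcontains hmem)
        push_cast [Nat.cast_sub (show 1 ≤ 2 * m by lia)] at this
        exact this
    · simp [potential, containsUpTo_update_succ, hcontains]
  calc
    _ = weight f m / (2 * m - 1) * ∑ v ∈ Icc 1 m,
        (degree f m v * potential E child parent (m + 1) (update f (m + 1) v) : ℚ) := by
      rw [mul_sum]
      refine sum_congr rfl fun v _ ↦ ?_
      rw [weight_update_succ hm]
      ring
    _ = _ := by
      rw [numerator, arrivalFactor, denominator]
      ring

lemma sum_weight_mul_potential (hinj : Set.InjOn child E) (hpos : ∀ q ∈ E, 1 ≤ parent q)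
    (hlt : ∀ q ∈ E, parent q < child q) (hm : 1 ≤ m) :
    ∑ f ∈ parentFunctions m, weight f m * potential E child parent m f =
      (∏ v ∈ Icc 1 m, ((pendingChildren E child parent v v).factorial : ℚ)) *
        ∏ t ∈ Icc 2 m, arrivalFactor E child parent t := by
  induction m, hm using Nat.le_induction with
  | base =>
    have contains_zero : ContainsUpTo E child parent 1 0 := fun q hq hq₁ ↦ by
      have := hpos q hq
      have := hlt q hq
      lia
    simp [parentFunctions_one, weight, potential, contains_zero, degree, Nat.one_ascFactorial]
  | succ m hm ih =>
    rw [sum_parentFunctions_succ m hm,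
      sum_congr rfl fun f hf ↦ sum_weight_mul_potential_update_succ hinj hpos hlt hm
        (mem_parentFunctions.1 hf),
      ← sum_mul, ih, prod_Icc_succ_top (by lia), prod_Icc_succ_top (by lia)]
    ring

theorem sum_weight_filter_contains (hinj : Set.InjOn child E) (hpos : ∀ q ∈ E, 1 ≤ parent q)
    (hlt : ∀ q ∈ E, parent q < child q) (hle : ∀ q ∈ E, child q ≤ n) (hn : 1 ≤ n) :
    ∑ f ∈ parentFunctions n with ∀ q ∈ E, f (child q) = parent q, weight f n =
      (∏ v ∈ Icc 1 n, ((#{q ∈ E | parent q = v}).factorial : ℚ)) *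
        ∏ t ∈ Icc 2 n, arrivalFactor E child parent t := by
  have all_pending : ∀ v, pendingChildren E child parent v v = #{q ∈ E | parent q = v} := fun v ↦
    congrArg card (filter_congr fun q hq ↦ by have := hlt q hq; lia)
  have none_pending : ∀ v, pendingChildren E child parent n v = 0 := fun v ↦
    card_eq_zero.2 (filter_eq_empty_iff.2 fun q hq ↦ by have := hle q hq; lia)
  have contains_iff : ∀ f : ℕ → ℕ,
      ContainsUpTo E child parent n f ↔ ∀ q ∈ E, f (child q) = parent q := fun f ↦
    forall₂_congr fun q hq ↦ by simp [hle q hq]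
  simp only [← all_pending]
  rw [← sum_weight_mul_potential hinj hpos hlt hn, sum_filter]
  refine sum_congr rfl fun f _ ↦ ?_
  simp [potential, none_pending, contains_iff]

lemma prod_arrivalFactor_of_crossingEdges_eq {k u v : ℕ} (hu : 1 ≤ u)
    (hcross : ∀ t ∈ Ioc u v, crossingEdges E child parent t = k) :
    ∏ t ∈ Ioc u v, arrivalFactor E child parent t =
      (∏ t ∈ Ioc u v, (2 * (t : ℚ) - 3 + k) / (2 * t - 3)) *
        ∏ t ∈ E.image child with t ∈ Ioc u v, 1 / (2 * (t : ℚ) - 3 + k) := by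
  have swap : ({t ∈ E.image child | t ∈ Ioc u v} : Finset ℕ) =
      {t ∈ Ioc u v | t ∈ E.image child} := by
    ext t
    simp only [mem_filter, and_comm]
  rw [swap, prod_filter, ← prod_mul_distrib]
  refine prod_congr rfl fun t ht ↦ ?_
  have pos : (0 : ℚ) < 2 * t - 3 + k := by
    have : (2 : ℚ) ≤ t := by exact_mod_cast hu.trans_lt (mem_Ioc.1 ht).1
    have : (0 : ℚ) ≤ k := k.cast_nonneg
    linarith
  rw [arrivalFactor, hcross t ht]
  split_ifs <;> field_simp

lemma prod_arrivalFactor_eq_one {u v : ℕ} (hu : 1 ≤ u)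
    (hcross : ∀ t ∈ Ioc u v, crossingEdges E child parent t = 0)
    (hchild : ∀ q ∈ E, child q ∉ Ioc u v) :
    ∏ t ∈ Ioc u v, arrivalFactor E child parent t = 1 := by
  have no_child : ({t ∈ E.image child | t ∈ Ioc u v} : Finset ℕ) = ∅ := by
    simpa [filter_eq_empty_iff] using hchild
  rw [prod_arrivalFactor_of_crossingEdges_eq hu hcross, no_child, prod_empty, mul_one]
  refine prod_eq_one fun t ht ↦ ?_
  have : (2 : ℚ) ≤ t := by exact_mod_cast hu.trans_lt (mem_Ioc.1 ht).1
  rw [Nat.cast_zero, add_zero, div_self (by linarith)]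

end PrescribedEdges

lemma prod_Ioc_telescope {c a : ℕ} (hc : 1 ≤ c) (hca : c ≤ a) :
    ∏ t ∈ Ioc c a, (2 * (t : ℚ) - 1) / (2 * t - 3) = (2 * a - 1) / (2 * c - 1) := by
  have hc' : (1 : ℚ) ≤ c := by exact_mod_cast hc
  induction a, hca using Nat.le_induction with
  | base => rw [Ioc_self, prod_empty, div_self (by linarith)]
  | succ a hca ih =>
    have ha' : (c : ℚ) ≤ a := by exact_mod_cast hca
    have hc₀ : 2 * (c : ℚ) - 1 ≠ 0 := by linarith
    have ha₀ : 2 * ((a : ℚ) + 1) - 3 ≠ 0 := by linarith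
    rw [prod_Ioc_succ_top hca, ih]
    push_cast
    field_simp
    ring

/-- The later endpoint of the edge joining `x q` and `x (q + 1)`. -/
def edgeChild (x : ℕ → ℕ) (q : ℕ) : ℕ := max (x q) (x (q + 1))

/-- The earlier endpoint of the edge joining `x q` and `x (q + 1)`. -/
def edgeParent (x : ℕ → ℕ) (q : ℕ) : ℕ := min (x q) (x (q + 1))

/-- `x 0, …, x p` are distinct, strictly decrease up to index `m` and strictly increase
afterwards. -/
structure IsValley (x : ℕ → ℕ) (p m : ℕ) : Prop where
  le : m ≤ p
  injOn : Set.InjOn x (Set.Iic p)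
  succ_lt : ∀ q < m, x (q + 1) < x q
  lt_succ : ∀ q, m ≤ q → q < p → x q < x (q + 1)

namespace IsValley

variable {x : ℕ → ℕ} {p m q t : ℕ}

lemma edgeChild_of_lt (h : IsValley x p m) (hq : q < m) : edgeChild x q = x q :=
  max_eq_left (h.succ_lt q hq).le

lemma edgeParent_of_lt (h : IsValley x p m) (hq : q < m) : edgeParent x q = x (q + 1) :=
  min_eq_right (h.succ_lt q hq).le

lemma edgeChild_of_le (h : IsValley x p m) (hmq : m ≤ q) (hq : q < p) :
    edgeChild x q = x (q + 1) :=
  max_eq_right (h.lt_succ q hmq hq).le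

lemma edgeParent_of_le (h : IsValley x p m) (hmq : m ≤ q) (hq : q < p) : edgeParent x q = x q :=
  min_eq_left (h.lt_succ q hmq hq).le

lemma edgeParent_lt_edgeChild (h : IsValley x p m) (hq : q < p) :
    edgeParent x q < edgeChild x q :=
  min_lt_max.2 (h.injOn.ne hq.le hq q.lt_succ_self.ne)

lemma strictAntiOn (h : IsValley x p m) : StrictAntiOn x (Set.Iic m) :=
  strictAntiOn_Iic_of_succ_lt h.succ_lt

lemma strictMonoOn (h : IsValley x p m) : StrictMonoOn x (Set.Icc m p) :=
  strictMonoOn_of_lt_add_one Set.ordConnected_Icc fun q _ hq hq' ↦ h.lt_succ q hq.1 hq'.2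

lemma bottom_le (h : IsValley x p m) (hq : q ≤ p) : x m ≤ x q := by
  rcases le_total q m with hqm | hmq
  · exact h.strictAntiOn.antitoneOn hqm Set.self_mem_Iic hqm
  · exact h.strictMonoOn.monotoneOn ⟨le_rfl, h.le⟩ ⟨hmq, hq⟩ hmq

lemma bottom_lt (h : IsValley x p m) (hq : q ≤ p) (hqm : q ≠ m) : x m < x q :=
  (h.bottom_le hq).lt_of_ne' (h.injOn.ne hq h.le hqm)

lemma le_max (h : IsValley x p m) (hq : q ≤ p) : x q ≤ max (x 0) (x p) := by
  rcases le_total q m with hqm | hmq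
  · exact le_max_of_le_left <|
      h.strictAntiOn.antitoneOn (Nat.zero_le m) hqm q.zero_le
  · exact le_max_of_le_right <|
      h.strictMonoOn.monotoneOn ⟨hmq, hq⟩ ⟨h.le, le_rfl⟩ hq

lemma bottom_le_min (h : IsValley x p m) : x m ≤ min (x 0) (x p) :=
  le_min (h.bottom_le p.zero_le) (h.bottom_le le_rfl)

lemma min_lt_max (h : IsValley x p m) (hp : 1 ≤ p) : min (x 0) (x p) < max (x 0) (x p) :=
  _root_.min_lt_max.2 (h.injOn.ne p.zero_le Set.self_mem_Iic (by lia))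

lemma min_eq_bottom_iff (h : IsValley x p m) : min (x 0) (x p) = x m ↔ m = 0 ∨ m = p := by
  constructor
  · intro hmin
    rcases min_choice (x 0) (x p) with h₀ | hp
    · exact .inl (h.injOn h.le p.zero_le (hmin.symm.trans h₀))
    · exact .inr (h.injOn h.le Set.self_mem_Iic (hmin.symm.trans hp))
  · rintro (rfl | rfl)
    · exact min_eq_left (h.bottom_le le_rfl)
    · exact min_eq_right (h.bottom_le m.zero_le)

lemma mem_image_edgeChild_iff (h : IsValley x p m) :
    t ∈ (range p).image (edgeChild x) ↔ ∃ q ≤ p, q ≠ m ∧ x q = t := by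
  simp only [mem_image, mem_range]
  constructor
  · rintro ⟨q, hq, rfl⟩
    rcases lt_or_ge q m with hqm | hmq
    · exact ⟨q, hq.le, hqm.ne, (h.edgeChild_of_lt hqm).symm⟩
    · exact ⟨q + 1, hq, by lia, (h.edgeChild_of_le hmq hq).symm⟩
  · rintro ⟨q, hq, hqm, rfl⟩
    rcases hqm.lt_or_gt with hqm | hmq
    · exact ⟨q, hqm.trans_le h.le, h.edgeChild_of_lt hqm⟩
    · obtain ⟨q, rfl⟩ := Nat.exists_eq_add_of_lt hmq
      exact ⟨m + q, hq, h.edgeChild_of_le (by lia) hq⟩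

lemma edgeChild_injOn (h : IsValley x p m) : Set.InjOn (edgeChild x) (range p) := by
  intro q hq q' hq' heq
  rw [mem_coe, mem_range] at hq hq'
  rcases lt_or_ge q m with hqm | hmq <;> rcases lt_or_ge q' m with hqm' | hmq'
  · rw [h.edgeChild_of_lt hqm, h.edgeChild_of_lt hqm'] at heq
    exact h.injOn hq.le hq'.le heq
  · rw [h.edgeChild_of_lt hqm, h.edgeChild_of_le hmq' hq'] at heq
    have := h.injOn hq.le hq' heq
    lia
  · rw [h.edgeChild_of_le hmq hq, h.edgeChild_of_lt hqm'] at heq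
    have := h.injOn hq hq'.le heq
    lia
  · rw [h.edgeChild_of_le hmq hq, h.edgeChild_of_le hmq' hq'] at heq
    exact Nat.succ_injective (h.injOn hq hq' heq)

/-- Along each of the two branches the edge levels telescope. -/
lemma crossingEdges_eq (h : IsValley x p m) (t : ℕ) :
    crossingEdges (range p) (edgeChild x) (edgeParent x) t =
      (if x m < t ∧ t ≤ x 0 then 1 else 0) + if x m < t ∧ t ≤ x p then 1 else 0 := by
  have descending : ∀ q ∈ range m, (if edgeParent x q < t ∧ t ≤ edgeChild x q then (1 : ℤ) else 0) =
      (if x (q + 1) < t then 1 else 0) - if x q < t then 1 else 0 := fun q hq ↦ by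
    have hq := mem_range.1 hq
    have := h.succ_lt q hq
    rw [h.edgeParent_of_lt hq, h.edgeChild_of_lt hq]
    split_ifs <;> lia
  have ascending : ∀ q ∈ Ico m p, (if edgeParent x q < t ∧ t ≤ edgeChild x q then (1 : ℤ) else 0) =
      -((if x (q + 1) < t then 1 else 0) - if x q < t then 1 else 0) := fun q hq ↦ by
    obtain ⟨hmq, hq⟩ := mem_Ico.1 hq
    have := h.lt_succ q hmq hq
    rw [h.edgeParent_of_le hmq hq, h.edgeChild_of_le hmq hq]
    split_ifs <;> lia
  have crossings : (crossingEdges (range p) (edgeChild x) (edgeParent x) t : ℤ) =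
      2 * (if x m < t then 1 else 0) - (if x 0 < t then 1 else 0) - if x p < t then 1 else 0 := by
    rw [crossingEdges, card_filter]
    push_cast
    rw [← sum_range_add_sum_Ico _ h.le, sum_congr rfl descending, sum_congr rfl ascending,
      sum_range_sub (fun q ↦ if x q < t then (1 : ℤ) else 0), sum_neg_distrib,
      sum_Ico_sub (fun q ↦ if x q < t then (1 : ℤ) else 0) h.le]
    ring
  have := h.bottom_le p.zero_le
  have := h.bottom_le le_rfl
  split_ifs at crossings ⊢ <;> lia

lemma edgeParent_eq_bottom_iff (h : IsValley x p m) (hq : q < p) :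
    edgeParent x q = x m ↔ q + 1 = m ∨ q = m := by
  rcases lt_or_ge q m with hqm | hmq
  · rw [h.edgeParent_of_lt hqm, h.injOn.eq_iff hq h.le]
    lia
  · rw [h.edgeParent_of_le hmq hq, h.injOn.eq_iff hq.le h.le]
    lia

lemma card_edgeParent_eq_le_one (h : IsValley x p m) {v : ℕ} (hv : v ≠ x m) :
    #{q ∈ range p | edgeParent x q = v} ≤ 1 := by
  have parent_index : ∀ q < p, edgeParent x q = v → q < m ∧ x (q + 1) = v ∨ m < q ∧ x q = v := by
    rintro q hq rfl
    rcases lt_trichotomy q m with hqm | rfl | hmq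
    · exact .inl ⟨hqm, (h.edgeParent_of_lt hqm).symm⟩
    · exact absurd (h.edgeParent_of_le le_rfl hq) hv
    · exact .inr ⟨hmq, (h.edgeParent_of_le hmq.le hq).symm⟩
  refine card_le_one.2 fun q hq q' hq' ↦ ?_
  obtain ⟨hq, hqv⟩ := mem_filter.1 hq
  obtain ⟨hq', hqv'⟩ := mem_filter.1 hq'
  rw [mem_range] at hq hq'
  rcases parent_index q hq hqv with ⟨_, hx⟩ | ⟨_, hx⟩ <;>
    rcases parent_index q' hq' hqv' with ⟨_, hx'⟩ | ⟨_, hx'⟩ <;>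
    have := h.injOn (Set.mem_Iic.2 (by lia)) (Set.mem_Iic.2 (by lia)) (hx.trans hx'.symm) <;>
    lia

lemma card_edgeParent_eq_bottom (h : IsValley x p m) (hp : 1 ≤ p) :
    #{q ∈ range p | edgeParent x q = x m} = if min (x 0) (x p) = x m then 1 else 2 := by
  have at_bottom : ({q ∈ range p | edgeParent x q = x m} : Finset ℕ) =
      {q ∈ range p | q + 1 = m ∨ q = m} :=
    filter_congr fun q hq ↦ h.edgeParent_eq_bottom_iff (mem_range.1 hq)
  have := h.le
  simp only [at_bottom, h.min_eq_bottom_iff]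
  split_ifs with hm
  · refine card_eq_one.2 ⟨m - 1, ?_⟩
    ext q
    simp only [mem_filter, mem_range, mem_singleton]
    lia
  · refine card_eq_two.2 ⟨m - 1, m, by lia, ?_⟩
    ext q
    simp only [mem_filter, mem_range, mem_insert, mem_singleton]
    lia

lemma prod_factorial_card_edgeParent (h : IsValley x p m) (hp : 1 ≤ p) {n : ℕ}
    (hm : x m ∈ Icc 1 n) :
    ∏ v ∈ Icc 1 n, ((#{q ∈ range p | edgeParent x q = v}).factorial : ℚ) =
      if min (x 0) (x p) = x m then 1 else 2 := by
  rw [prod_eq_single_of_mem (x m) hm fun v _ hv ↦ ?_, h.card_edgeParent_eq_bottom hp]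
  · split_ifs <;> norm_num
  · rw [Nat.factorial_eq_one.2 (h.card_edgeParent_eq_le_one hv), Nat.cast_one]

lemma edgeChild_mem_Ioc (h : IsValley x p m) (hq : q < p) :
    edgeChild x q ∈ Ioc (x m) (max (x 0) (x p)) := by
  obtain ⟨q', hq', hne, heq⟩ :=
    h.mem_image_edgeChild_iff.1 (mem_image_of_mem (edgeChild x) (mem_range.2 hq))
  exact heq ▸ mem_Ioc.2 ⟨h.bottom_lt hq' hne, h.le_max hq'⟩

lemma prod_arrivalFactor_outside (h : IsValley x p m) {u v : ℕ} (hu : 1 ≤ u)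
    (huv : v ≤ x m ∨ max (x 0) (x p) ≤ u) :
    ∏ t ∈ Ioc u v, arrivalFactor (range p) (edgeChild x) (edgeParent x) t = 1 := by
  refine prod_arrivalFactor_eq_one hu (fun t ht ↦ ?_) fun q hq hmem ↦ ?_
  · rw [mem_Ioc] at ht
    rw [h.crossingEdges_eq, if_neg (by lia), if_neg (by lia)]
  · have := h.edgeChild_mem_Ioc (mem_range.1 hq)
    rw [mem_Ioc] at this hmem
    lia

lemma prod_arrivalFactor_bottom_min (h : IsValley x p m) (hpos : 1 ≤ x m) :
    ∏ t ∈ Ioc (x m) (min (x 0) (x p)), arrivalFactor (range p) (edgeChild x) (edgeParent x) t =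
      (2 * (min (x 0) (x p) : ℕ) - 1) / (2 * x m - 1) *
        ∏ t ∈ (range p).image (edgeChild x) with t ∈ Ioc (x m) (min (x 0) (x p)),
          1 / (2 * (t : ℚ) - 1) := by
  have two_crossings : ∀ t ∈ Ioc (x m) (min (x 0) (x p)),
      crossingEdges (range p) (edgeChild x) (edgeParent x) t = 2 := fun t ht ↦ by
    rw [mem_Ioc] at ht
    rw [h.crossingEdges_eq, if_pos (by lia), if_pos (by lia)]
  have sub_one : ∀ t : ℕ, 2 * (t : ℚ) - 3 + (2 : ℕ) = 2 * t - 1 := fun t ↦ by push_cast; ring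
  rw [prod_arrivalFactor_of_crossingEdges_eq hpos two_crossings]
  simp only [sub_one, prod_Ioc_telescope hpos h.bottom_le_min]

lemma prod_arrivalFactor_min_max (h : IsValley x p m) (hpos : 1 ≤ x m) :
    ∏ t ∈ Ioc (min (x 0) (x p)) (max (x 0) (x p)),
        arrivalFactor (range p) (edgeChild x) (edgeParent x) t =
      (∏ t ∈ Icc (min (x 0) (x p) + 1) (max (x 0) (x p)), (2 * (t : ℚ) - 2) / (2 * t - 3)) *
        ∏ t ∈ (range p).image (edgeChild x) with t ∈ Ioc (min (x 0) (x p)) (max (x 0) (x p)),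
          1 / (2 * (t : ℚ) - 2) := by
  have hca := h.bottom_le_min
  have one_crossing : ∀ t ∈ Ioc (min (x 0) (x p)) (max (x 0) (x p)),
      crossingEdges (range p) (edgeChild x) (edgeParent x) t = 1 := fun t ht ↦ by
    rw [mem_Ioc] at ht
    rw [h.crossingEdges_eq]
    split_ifs <;> lia
  have sub_two : ∀ t : ℕ, 2 * (t : ℚ) - 3 + (1 : ℕ) = 2 * t - 2 := fun t ↦ by push_cast; ring
  rw [prod_arrivalFactor_of_crossingEdges_eq (hpos.trans hca) one_crossing,
    Icc_add_one_left_eq_Ioc]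
  simp only [sub_two]

lemma prod_arrivalFactor (h : IsValley x p m) (hpos : 1 ≤ x m) {n : ℕ}
    (hn : max (x 0) (x p) ≤ n) :
    ∏ t ∈ Icc 2 n, arrivalFactor (range p) (edgeChild x) (edgeParent x) t =
      ((2 * (min (x 0) (x p) : ℕ) - 1) / (2 * x m - 1) *
        ∏ t ∈ (range p).image (edgeChild x) with t ∈ Ioc (x m) (min (x 0) (x p)),
          1 / (2 * (t : ℚ) - 1)) *
      ((∏ t ∈ Icc (min (x 0) (x p) + 1) (max (x 0) (x p)), (2 * (t : ℚ) - 2) / (2 * t - 3)) *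
        ∏ t ∈ (range p).image (edgeChild x) with t ∈ Ioc (min (x 0) (x p)) (max (x 0) (x p)),
          1 / (2 * (t : ℚ) - 2)) := by
  have hca := h.bottom_le_min
  have hab : min (x 0) (x p) ≤ max (x 0) (x p) := min_le_max
  have max_pos : 1 ≤ max (x 0) (x p) := hpos.trans (hca.trans hab)
  rw [show Icc 2 n = Ioc 1 n from Icc_add_one_left_eq_Ioc 1 n,
    ← prod_Ioc_consecutive _ hpos (hca.trans (hab.trans hn)),
    ← prod_Ioc_consecutive _ hca (hab.trans hn), ← prod_Ioc_consecutive _ hab hn,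
    h.prod_arrivalFactor_outside le_rfl (.inl le_rfl), one_mul,
    h.prod_arrivalFactor_outside max_pos (.inr le_rfl), mul_one,
    h.prod_arrivalFactor_bottom_min hpos, h.prod_arrivalFactor_min_max hpos]

lemma filter_image_edgeChild_Ioc (h : IsValley x p m) {u v : ℕ} (hmu : x m ≤ u) (huv : u < v)
    (hv : v = x 0 ∨ v = x p) (hx₀ : x 0 ∉ Set.Ioo u v) (hxp : x p ∉ Set.Ioo u v) :
    {t ∈ (range p).image (edgeChild x) | t ∈ Ioc u v} =
      insert v ({q ∈ Ioo 0 p | u < x q ∧ x q < v}.image x) := by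
  ext t
  simp only [mem_filter, h.mem_image_edgeChild_iff, mem_insert, mem_image, mem_Ioc, mem_Ioo]
  constructor
  · rintro ⟨⟨q, hq, -, rfl⟩, hut, htv⟩
    refine htv.eq_or_lt.imp_right fun htv ↦ ⟨q, ⟨⟨?_, ?_⟩, hut, htv⟩, rfl⟩
    · exact q.pos_of_ne_zero (by rintro rfl; exact hx₀ ⟨hut, htv⟩)
    · exact hq.lt_of_ne (by rintro rfl; exact hxp ⟨hut, htv⟩)
  · rintro (rfl | ⟨q, ⟨⟨-, hq⟩, hut, htv⟩, rfl⟩)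
    · refine ⟨?_, huv, le_rfl⟩
      rcases hv with rfl | rfl
      · exact ⟨0, p.zero_le, by rintro rfl; lia, rfl⟩
      · exact ⟨p, le_rfl, by rintro rfl; lia, rfl⟩
    · exact ⟨⟨q, hq.le, by rintro rfl; lia, rfl⟩, hut, htv.le⟩

lemma prod_filter_image_edgeChild_Ioc {M : Type*} [CommMonoid M] (h : IsValley x p m) {u v : ℕ}
    (hmu : x m ≤ u) (huv : u < v)
    (hv : v = x 0 ∨ v = x p) (hx₀ : x 0 ∉ Set.Ioo u v) (hxp : x p ∉ Set.Ioo u v) (φ : ℕ → M) :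
    ∏ t ∈ (range p).image (edgeChild x) with t ∈ Ioc u v, φ t =
      φ v * ∏ t ∈ {q ∈ Ioo 0 p | u < x q ∧ x q < v}.image x, φ t := by
  rw [h.filter_image_edgeChild_Ioc hmu huv hv hx₀ hxp, prod_insert]
  simp only [mem_image, mem_filter]
  rintro ⟨q, ⟨-, -, hlt⟩, rfl⟩
  exact lt_irrefl _ hlt

theorem sum_weight_path (h : IsValley x p m) (hp : 1 ≤ p) (hpos : 1 ≤ x m) {n : ℕ}
    (hn : max (x 0) (x p) ≤ n) :
    ∑ f ∈ parentFunctions n with ∀ q ∈ range p, f (edgeChild x q) = edgeParent x q, weight f n =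
      (if min (x 0) (x p) = x m then 1 else 2) *
      ((2 * (min (x 0) (x p) : ℕ) - 1) / (2 * x m - 1) *
        ∏ t ∈ (range p).image (edgeChild x) with t ∈ Ioc (x m) (min (x 0) (x p)),
          1 / (2 * (t : ℚ) - 1)) *
      (1 / (2 * (max (x 0) (x p) : ℕ) - 2) *
        (∏ i ∈ {q ∈ Ioo 0 p | min (x 0) (x p) < x q ∧ x q < max (x 0) (x p)}.image x,
          1 / (2 * (i : ℚ) - 2)) *
        ∏ t ∈ Icc (min (x 0) (x p) + 1) (max (x 0) (x p)), (2 * (t : ℚ) - 2) / (2 * t - 3)) := by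
  have parent_pos : ∀ q ∈ range p, 1 ≤ edgeParent x q := fun q hq ↦ by
    have hq := mem_range.1 hq
    exact hpos.trans (le_min (h.bottom_le hq.le) (h.bottom_le hq))
  have child_le : ∀ q ∈ range p, edgeChild x q ≤ n := fun q hq ↦ by
    have hq := mem_range.1 hq
    exact (max_le (h.le_max hq.le) (h.le_max hq)).trans hn
  have bottom_mem : x m ∈ Icc 1 n := mem_Icc.2 ⟨hpos, (h.le_max h.le).trans hn⟩
  rw [sum_weight_filter_contains h.edgeChild_injOn parent_pos
      (fun q hq ↦ h.edgeParent_lt_edgeChild (mem_range.1 hq)) child_le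
      ((mem_Icc.1 bottom_mem).1.trans (mem_Icc.1 bottom_mem).2),
    h.prod_factorial_card_edgeParent hp bottom_mem, h.prod_arrivalFactor hpos hn,
    h.prod_filter_image_edgeChild_Ioc h.bottom_le_min (h.min_lt_max hp) (by grind)
      (by grind) (by grind)]
  ring

theorem sum_weight_path_of_min_ne (h : IsValley x p m) (hp : 1 ≤ p) (hpos : 1 ≤ x m) {n : ℕ}
    (hn : max (x 0) (x p) ≤ n) (hne : min (x 0) (x p) ≠ x m) :
    ∑ f ∈ parentFunctions n with ∀ q ∈ range p, f (edgeChild x q) = edgeParent x q, weight f n =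
      2 / (2 * (x m : ℚ) - 1) * (1 / (2 * (max (x 0) (x p) : ℕ) - 2)) *
        (∏ i ∈ {q ∈ Ioo 0 p | x m < x q ∧ x q < min (x 0) (x p)}.image x,
          1 / (2 * (i : ℚ) - 1)) *
        (∏ i ∈ {q ∈ Ioo 0 p | min (x 0) (x p) < x q ∧ x q < max (x 0) (x p)}.image x,
          1 / (2 * (i : ℚ) - 2)) *
        ∏ t ∈ Icc (min (x 0) (x p) + 1) (max (x 0) (x p)), (2 * (t : ℚ) - 2) / (2 * t - 3) := by
  have hlt : x m < min (x 0) (x p) := h.bottom_le_min.lt_of_ne' hne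
  have min_ne_zero : 2 * ((min (x 0) (x p) : ℕ) : ℚ) - 1 ≠ 0 := by
    have : (1 : ℚ) ≤ (min (x 0) (x p) : ℕ) := by exact_mod_cast hpos.trans hlt.le
    linarith
  rw [h.sum_weight_path hp hpos hn, if_neg hne, h.prod_filter_image_edgeChild_Ioc le_rfl hlt
    (by grind) (by grind) (by grind)]
  field_simp

theorem sum_weight_path_of_min_eq (h : IsValley x p m) (hp : 1 ≤ p) (hpos : 1 ≤ x m) {n : ℕ}
    (hn : max (x 0) (x p) ≤ n) (heq : min (x 0) (x p) = x m) :
    ∑ f ∈ parentFunctions n with ∀ q ∈ range p, f (edgeChild x q) = edgeParent x q, weight f n =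
      1 / (2 * (max (x 0) (x p) : ℕ) - 2) *
        (∏ i ∈ {q ∈ Ioo 0 p | min (x 0) (x p) < x q ∧ x q < max (x 0) (x p)}.image x,
          1 / (2 * (i : ℚ) - 2)) *
        ∏ t ∈ Icc (min (x 0) (x p) + 1) (max (x 0) (x p)), (2 * (t : ℚ) - 2) / (2 * t - 3) := by
  have bottom_ne_zero : 2 * (x m : ℚ) - 1 ≠ 0 := by
    have : (1 : ℚ) ≤ x m := by exact_mod_cast hpos
    linarith
  rw [h.sum_weight_path hp hpos hn, if_pos heq, heq, Ioc_self]
  simp [div_self bottom_ne_zero]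

end IsValley

lemma sum_probPF_filter_path (n p : ℕ) (x : ℕ → ℕ) :
    ∑ f with ValidPF n f ∧ ∀ q < p, fext n f (max (x q) (x (q + 1))) = min (x q) (x (q + 1)),
        probPF n f =
      ∑ f ∈ parentFunctions n with ∀ q ∈ range p, f (edgeChild x q) = edgeParent x q,
        weight f n := by
  rw [← sum_probPF_filter_fext]
  simp only [mem_range, edgeChild, edgeParent]

end RecursiveTree

/-- Bollobás–Riordan formula: the probability, under the scale-free random tree
distribution on `{1, …, n}`, that a given valley-shaped sequence of distinct vertices
`x_0, x_1, …, x_p` (strictly decreasing to `x_m = c`, then strictly increasing) forms a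
path in `T_n^f`, expressed in terms of `a = min(x_0, x_p)`, `b = max(x_0, x_p)`,
`c = x_m`, `L = {x_q : 0 < q < p, c < x_q < a}` and `R = {x_q : 0 < q < p, a < x_q < b}`. -/
theorem path_probability_formula (n p : ℕ) (hn : 2 ≤ n) (hp : 1 ≤ p)
    (x : ℕ → ℕ) (hrange : ∀ q ≤ p, 1 ≤ x q ∧ x q ≤ n)
    (hdistinct : ∀ q ≤ p, ∀ q' ≤ p, q ≠ q' → x q ≠ x q')
    (m : ℕ) (hm : m ≤ p)
    (hdec : ∀ q, q < m → x (q+1) < x q)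
    (hinc : ∀ q, m ≤ q → q < p → x q < x (q+1))
    (a b c : ℕ) (ha : a = min (x 0) (x p)) (hb : b = max (x 0) (x p)) (hc : c = x m)
    (L R : Finset ℕ)
    (hL : L = ((Finset.Ioo 0 p).filter (fun q => c < x q ∧ x q < a)).image x)
    (hR : R = ((Finset.Ioo 0 p).filter (fun q => a < x q ∧ x q < b)).image x) :
    (a ≠ c →
      ∑ f ∈ Finset.univ.filter (fun f : Fin (n+1) → Fin (n+1) => ValidPF n f ∧
          ∀ q < p, fext n f (max (x q) (x (q+1))) = min (x q) (x (q+1))),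
        probPF n f
      = (2 / (2*(c : ℚ) - 1)) * (1 / (2*(b : ℚ) - 2)) *
        (∏ i ∈ L, 1 / (2*(i : ℚ) - 1)) * (∏ i ∈ R, 1 / (2*(i : ℚ) - 2)) *
        (∏ t ∈ Finset.Icc (a+1) b, (2*(t : ℚ) - 2) / (2*(t : ℚ) - 3))) ∧
    (a = c →
      ∑ f ∈ Finset.univ.filter (fun f : Fin (n+1) → Fin (n+1) => ValidPF n f ∧
          ∀ q < p, fext n f (max (x q) (x (q+1))) = min (x q) (x (q+1))),
        probPF n f
      = (1 / (2*(b : ℚ) - 2)) * (∏ i ∈ R, 1 / (2*(i : ℚ) - 2)) *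
        (∏ t ∈ Finset.Icc (a+1) b, (2*(t : ℚ) - 2) / (2*(t : ℚ) - 3))) := by
  have valley : RecursiveTree.IsValley x p m :=
    ⟨hm, fun q hq q' hq' h ↦ by_contra fun hne ↦ hdistinct q hq q' hq' hne h, hdec, hinc⟩
  have bottom_pos : 1 ≤ x m := (hrange m hm).1
  have max_le_n : max (x 0) (x p) ≤ n := max_le (hrange 0 p.zero_le).2 (hrange p le_rfl).2
  subst ha hb hc hL hR
  rw [RecursiveTree.sum_probPF_filter_path]
  exact ⟨valley.sum_weight_path_of_min_ne hp bottom_pos max_le_n,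
    valley.sum_weight_path_of_min_eq hp bottom_pos max_le_n⟩

end
end
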